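/- arXiv:2603.21267 — 2 statements merged into one kernel-verified Lean document; each statement's English description precedes it below -/
import Mathlib

section
/- Let m, n_1,…,n_m be positive integers, N = n_1 + ⋯ + n_m, and let T be a symmetric positive semidefinite N × N matrix of rank r with diagonal blocks T_{ii} of size n_i × n_i. Suppose Q_i are symmetric n_i × n_i matrices with Q_i ≥ I_{n_i}, T_{ii} ≤ I_{n_i} and (I_{n_i} − T_{ii})(Q_i − I_{n_i}) = 0 for all i, and let P = diag(p_1 I_{n_1},…,p_m I_{n_m}) with p_i > 0. Let μ be the centered Gaussian measure on ℝ^N with covariance T, i.e. the pushforward of γ_r under the linear map z ↦ Uz for an N × r matrix U with U Uᵀ = T. If T ≤ P^{-1}, then for all nonnegative functions f_i on ℝ^{n_i}, integrable with respect to γ_{n_i} and more log-convex than g_{(Q_i − I_{n_i})/(2π)}, writing x ∈ ℝ^N as (x_1,…,x_m) with x_i ∈ ℝ^{n_i}, one has ∫_{ℝ^N} ∏_{i=1}^m f_i(x_i)^{p_i} dμ(x) ≤ ∏_{i=1}^m (∫_{ℝ^{n_i}} f_i dγ_{n_i})^{p_i}. -/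
open MeasureTheory Matrix
open scoped ENNReal

noncomputable section

/-- The centered Gaussian function attached to a matrix `Q` : `g_Q(x) = exp(-π⟨Qx,x⟩)`. -/
def gaussFn {k : ℕ} (Q : Matrix (Fin k) (Fin k) ℝ) (x : Fin k → ℝ) : ℝ :=
  Real.exp (-Real.pi * (Q.mulVec x ⬝ᵥ x))

/-- A nonnegative log-convex function. -/
def LogConvexFun {k : ℕ} (h : (Fin k → ℝ) → ℝ) : Prop :=
  (∀ x, 0 ≤ h x) ∧
    ∀ x y : Fin k → ℝ, ∀ a b : ℝ, 0 ≤ a → 0 ≤ b → a + b = 1 →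
      h (a • x + b • y) ≤ h x ^ a * h y ^ b

/-- `f` is more log-convex than `g_Q`, i.e. `f = g_Q · h` with `h` log-convex. -/
def MoreLogConvex {k : ℕ} (f : (Fin k → ℝ) → ℝ) (Q : Matrix (Fin k) (Fin k) ℝ) : Prop :=
  ∃ h : (Fin k → ℝ) → ℝ, LogConvexFun h ∧ f = fun x => gaussFn Q x * h x

/-- The standard Gaussian probability measure on `ℝ^k`. -/
def stdGaussian (k : ℕ) : Measure (Fin k → ℝ) :=
  volume.withDensity fun x =>
    ENNReal.ofReal ((2 * Real.pi) ^ (-(k : ℝ) / 2) * Real.exp (-(∑ i, x i ^ 2) / 2))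

open ProbabilityTheory in
/-- The density-defined standard Gaussian is the product of one-dimensional standard Gaussians. -/
lemma stdGaussian_eq_pi (k : ℕ) :
    _root_.stdGaussian k = Measure.pi (fun _ : Fin k => gaussianReal 0 1) := by
  symm
  refine Measure.pi_eq (fun s hs => ?_)
  have hdens : ∀ x : Fin k → ℝ, (2 * Real.pi) ^ (-(k : ℝ) / 2) * Real.exp (-(∑ i, x i ^ 2) / 2)
      = ∏ i, gaussianPDFReal 0 1 (x i) := by
    intro x
    simp only [gaussianPDFReal, Finset.prod_mul_distrib, ← Real.exp_sum]
    congr 1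
    · simp only [NNReal.coe_one, mul_one, Finset.prod_const, Finset.card_univ, Fintype.card_fin]
      rw [Real.sqrt_eq_rpow, ← Real.rpow_neg (by positivity), ← Real.rpow_natCast,
        ← Real.rpow_mul (by positivity)]
      congr 1
      ring
    · simp [Finset.sum_div, neg_div]
  have hind : ∀ x : Fin k → ℝ, (Set.univ.pi s).indicator
        (fun x => ENNReal.ofReal (∏ i, gaussianPDFReal 0 1 (x i))) x
      = ENNReal.ofReal (∏ i, (s i).indicator (gaussianPDFReal 0 1) (x i)) := by
    intro x
    by_cases hx : x ∈ Set.univ.pi s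
    · rw [Set.indicator_of_mem hx]
      congr 1
      refine Finset.prod_congr rfl fun i _ => ?_
      rw [Set.indicator_of_mem (hx i trivial)]
    · rw [Set.indicator_of_notMem hx]
      simp only [Set.mem_pi, Set.mem_univ, true_implies, not_forall] at hx
      obtain ⟨i, hi⟩ := hx
      rw [Finset.prod_eq_zero (Finset.mem_univ i) (Set.indicator_of_notMem hi _)]
      simp
  have hpos : ∀ i x, 0 ≤ (s i).indicator (gaussianPDFReal 0 1) x := fun i x =>
    Set.indicator_nonneg (fun y _ => gaussianPDFReal_nonneg 0 1 y) x
  have hint : ∀ i, Integrable ((s i).indicator (gaussianPDFReal 0 1)) volume := fun i =>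
    (integrable_gaussianPDFReal 0 1).indicator (hs i)
  rw [_root_.stdGaussian, withDensity_apply _ (MeasurableSet.univ_pi hs),
    ← lintegral_indicator (MeasurableSet.univ_pi hs)]
  simp_rw [hdens, hind]
  rw [volume_pi, ← ofReal_integral_eq_lintegral_ofReal (Integrable.fintype_prod hint)
      (Filter.Eventually.of_forall fun x => Finset.prod_nonneg fun i _ => hpos i _),
    integral_fintype_prod_eq_prod,
    ENNReal.ofReal_prod_of_nonneg fun i _ => integral_nonneg (hpos i)]
  refine Finset.prod_congr rfl fun i _ => ?_
  rw [ofReal_integral_eq_lintegral_ofReal (hint i) (Filter.Eventually.of_forall (hpos i)),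
    gaussianReal_of_var_ne_zero 0 one_ne_zero, withDensity_apply _ (hs i),
    ← lintegral_indicator (hs i)]
  refine lintegral_congr fun x => ?_
  by_cases hx : x ∈ s i <;> simp [hx, gaussianPDF]

lemma stdGaussian_map_toLp (k : ℕ) :
    (_root_.stdGaussian k).map (WithLp.toLp 2) =
      ProbabilityTheory.stdGaussian (EuclideanSpace ℝ (Fin k)) := by
  rw [stdGaussian_eq_pi, ProbabilityTheory.map_pi_eq_stdGaussian]

namespace GaussianBrascampLieb

set_option linter.unusedSectionVars false

open scoped RealInnerProductSpace
open ProbabilityTheory (stdGaussian charFun_stdGaussian)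

variable {E F : Type*} [NormedAddCommGroup E] [InnerProductSpace ℝ E] [FiniteDimensional ℝ E]
  [MeasurableSpace E] [BorelSpace E]
  [NormedAddCommGroup F] [InnerProductSpace ℝ F] [FiniteDimensional ℝ F]
  [MeasurableSpace F] [BorelSpace F]

/-- A coisometry pushes the standard Gaussian forward to the standard Gaussian. -/
lemma map_stdGaussian_of_coisometry (A : E →L[ℝ] F)
    (hA : ∀ t, ‖ContinuousLinearMap.adjoint A t‖ = ‖t‖) :
    (stdGaussian E).map A = stdGaussian F := by
  have : IsProbabilityMeasure ((stdGaussian E).map A) :=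
    Measure.isProbabilityMeasure_map A.continuous.aemeasurable
  apply Measure.ext_of_charFun
  ext t
  have h : charFun ((stdGaussian E).map A) t
      = charFun (stdGaussian E) (ContinuousLinearMap.adjoint A t) := by
    rw [charFun_apply, charFun_apply, integral_map A.continuous.aemeasurable
      (Measurable.aestronglyMeasurable (by fun_prop))]
    simp [ContinuousLinearMap.adjoint_inner_right]
  rw [h, charFun_stdGaussian, charFun_stdGaussian, hA]

/-- Independent centered Gaussians add up. -/
lemma map_prod_stdGaussian {a b c : ℝ} (h : a ^ 2 + b ^ 2 = c ^ 2) :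
    ((stdGaussian E).prod (stdGaussian E)).map (fun z => a • z.1 + b • z.2) =
      (stdGaussian E).map (fun z => c • z) := by
  have : IsProbabilityMeasure ((stdGaussian E).map (fun z => c • z)) :=
    Measure.isProbabilityMeasure_map (by fun_prop)
  have : IsProbabilityMeasure
      (((stdGaussian E).prod (stdGaussian E)).map (fun z => a • z.1 + b • z.2)) :=
    Measure.isProbabilityMeasure_map (by fun_prop)
  apply Measure.ext_of_charFun
  ext t
  have key : ∀ u : E, ∫ x, Complex.exp (⟪x, u⟫ * Complex.I) ∂(stdGaussian E)
      = Complex.exp (- ‖u‖ ^ 2 / 2) := fun u => by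
    rw [← charFun_stdGaussian, charFun_apply]
  rw [charFun_apply, charFun_apply, integral_map (by fun_prop)
    (Measurable.aestronglyMeasurable (by fun_prop)), integral_map (by fun_prop)
    (Measurable.aestronglyMeasurable (by fun_prop))]
  have h1 : ∀ z : E × E, Complex.exp (⟪a • z.1 + b • z.2, t⟫ * Complex.I)
      = Complex.exp (⟪z.1, a • t⟫ * Complex.I) * Complex.exp (⟪z.2, b • t⟫ * Complex.I) := by
    intro z
    rw [← Complex.exp_add, inner_add_left, real_inner_smul_left, real_inner_smul_left,
      real_inner_smul_right, real_inner_smul_right]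
    push_cast
    ring_nf
  simp_rw [h1]
  rw [integral_prod_mul (fun x : E => Complex.exp (⟪x, a • t⟫ * Complex.I))
    (fun x : E => Complex.exp (⟪x, b • t⟫ * Complex.I)), key, key, ← Complex.exp_add]
  simp_rw [real_inner_smul_left, ← real_inner_smul_right]
  rw [key]
  congr 1
  simp only [norm_smul, Complex.ofReal_mul, mul_pow, ← Complex.ofReal_pow, Real.norm_eq_abs,
    sq_abs, ← h]
  push_cast
  ring


lemma log_one_add_le_cubic {η : ℝ} (hη : -1 < η) :
    Real.log (1 + η) ≤ η - η ^ 2 / 2 + η ^ 3 / 3 := by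
  let g : ℝ → ℝ := fun t => t - t ^ 2 / 2 + t ^ 3 / 3 - Real.log (1 + t)
  have hd : ∀ t : ℝ, -1 < t → HasDerivAt g (t ^ 3 / (1 + t)) t := by
    intro t ht
    have h0 : (1 + t) ≠ 0 := by linarith
    have h1 : HasDerivAt (fun t : ℝ => Real.log (1 + t)) (1 / (1 + t)) t :=
      ((hasDerivAt_id t).const_add 1).log h0
    have h2 : HasDerivAt (fun t : ℝ => t - t ^ 2 / 2 + t ^ 3 / 3) (1 - t + t ^ 2) t := by
      have := ((hasDerivAt_id t).sub ((hasDerivAt_pow 2 t).div_const 2)).add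
        ((hasDerivAt_pow 3 t).div_const 3)
      refine this.congr_deriv ?_
      norm_num
    refine (h2.sub h1).congr_deriv ?_
    field_simp
    ring
  have g0 : g 0 = 0 := by simp [g]
  suffices h : g 0 ≤ g η by
    rw [g0] at h
    simp only [g] at h
    linarith
  rcases le_total 0 η with h | h
  · refine (monotoneOn_of_deriv_nonneg (convex_Icc 0 η)
      (fun t ht => (hd t (by linarith [ht.1])).continuousAt.continuousWithinAt)
      (fun t ht => ?_) (fun t ht => ?_)) ⟨le_rfl, h⟩ ⟨h, le_rfl⟩ h
    · rw [interior_Icc] at ht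
      exact (hd t (by linarith [ht.1])).differentiableAt.differentiableWithinAt
    · rw [interior_Icc] at ht
      have h0 := ht.1
      rw [(hd t (by linarith)).deriv]
      positivity
  · refine (antitoneOn_of_deriv_nonpos (convex_Icc η 0)
      (fun t ht => (hd t (by linarith [ht.1])).continuousAt.continuousWithinAt)
      (fun t ht => ?_) (fun t ht => ?_)) ⟨le_rfl, h⟩ ⟨h, le_rfl⟩ h
    · rw [interior_Icc] at ht
      exact (hd t (by linarith [ht.1])).differentiableAt.differentiableWithinAt
    · rw [interior_Icc] at ht
      rw [(hd t (by linarith [ht.1])).deriv]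
      refine div_nonpos_of_nonpos_of_nonneg ?_ (by linarith [ht.1])
      exact Odd.pow_nonpos (by decide) ht.2.le

lemma exp_le_quadratic_add (s : ℝ) :
    Real.exp s ≤ 1 + s + s ^ 2 / 2 + |s| ^ 3 * Real.exp |s| := by
  have h := Complex.norm_exp_sub_sum_le_norm_mul_exp (s : ℂ) 3
  have h2 : Complex.exp (s : ℂ) - ∑ m ∈ Finset.range 3, (s : ℂ) ^ m / (m.factorial : ℂ)
      = ((Real.exp s - (1 + s + s ^ 2 / 2) : ℝ) : ℂ) := by
    simp [Finset.sum_range_succ]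
  rw [h2, Complex.norm_real, Complex.norm_real, Real.norm_eq_abs, Real.norm_eq_abs] at h
  linarith [le_abs_self (Real.exp s - (1 + s + s ^ 2 / 2))]

/-- Second order Taylor bound for a weighted product of powers. -/
lemma exists_prod_rpow_le {ι : Type*} [Fintype ι] (p : ι → ℝ) (hp : ∀ i, 0 ≤ p i)
    {R : ℝ} (hR : 0 ≤ R) :
    ∃ C, 0 ≤ C ∧ ∀ η : ι → ℝ, (∀ i, -1 < η i) → ∑ i, |η i| ≤ R →
      ∏ i, (1 + η i) ^ p i ≤ 1 + ∑ i, p i * η i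
        + ((∑ i, p i * η i) ^ 2 - ∑ i, p i * η i ^ 2) / 2 + C * (∑ i, |η i|) ^ 3 := by
  set q := ∑ i, p i with hq
  have hq0 : 0 ≤ q := Finset.sum_nonneg fun i _ => hp i
  have hpq : ∀ i, p i ≤ q := fun i => Finset.single_le_sum (fun i _ => hp i) (Finset.mem_univ i)
  set D := q * (1 + R) with hD
  have hD0 : 0 ≤ D := by positivity
  set H := q + D * R with hH
  have hH0 : 0 ≤ H := by positivity
  refine ⟨q + q * D + D ^ 2 * R / 2 + H ^ 3 * Real.exp (H * R), by positivity, ?_⟩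
  intro η hη hηR
  set σ := ∑ i, |η i| with hσ
  have hσ0 : 0 ≤ σ := Finset.sum_nonneg fun i _ => abs_nonneg _
  have hησ : ∀ i, |η i| ≤ σ := fun i =>
    Finset.single_le_sum (f := fun i => |η i|) (fun i _ => abs_nonneg _) (Finset.mem_univ i)
  set L := ∑ i, p i * η i with hL
  set V := ∑ i, p i * η i ^ 2 with hV
  set W := ∑ i, p i * (η i ^ 3 / 3) with hW
  have bL : |L| ≤ q * σ := by
    rw [hL, hq, Finset.sum_mul]
    refine (Finset.abs_sum_le_sum_abs _ _).trans (Finset.sum_le_sum fun i _ => ?_)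
    rw [abs_mul, abs_of_nonneg (hp i)]
    exact mul_le_mul_of_nonneg_left (hησ i) (hp i)
  have bV0 : 0 ≤ V := Finset.sum_nonneg fun i _ => mul_nonneg (hp i) (sq_nonneg _)
  have bV : V ≤ q * σ ^ 2 := by
    rw [hV, hq, Finset.sum_mul]
    refine Finset.sum_le_sum fun i _ => mul_le_mul_of_nonneg_left ?_ (hp i)
    rw [← sq_abs]
    exact pow_le_pow_left₀ (abs_nonneg _) (hησ i) 2
  have bW : |W| ≤ q * σ ^ 3 := by
    rw [hW, hq, Finset.sum_mul]
    refine (Finset.abs_sum_le_sum_abs _ _).trans (Finset.sum_le_sum fun i _ => ?_)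
    rw [abs_mul, abs_of_nonneg (hp i), abs_div, abs_pow]
    refine mul_le_mul_of_nonneg_left ?_ (hp i)
    have := pow_le_pow_left₀ (abs_nonneg _) (hησ i) 3
    have h3 : |(3 : ℝ)| = 3 := by norm_num
    rw [h3]
    have : 0 ≤ |η i| ^ 3 := by positivity
    linarith
  set s := L - V / 2 + W with hs
  have hlog : ∏ i, (1 + η i) ^ p i ≤ Real.exp s := by
    have : ∀ i, (1 + η i) ^ p i ≤ Real.exp (p i * (η i - η i ^ 2 / 2 + η i ^ 3 / 3)) := by
      intro i
      rw [Real.rpow_def_of_pos (by linarith [hη i]), mul_comm]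
      exact Real.exp_le_exp.2 (mul_le_mul_of_nonneg_left (log_one_add_le_cubic (hη i)) (hp i))
    refine (Finset.prod_le_prod (fun i _ => Real.rpow_nonneg (by linarith [hη i]) _)
      fun i _ => this i).trans ?_
    rw [← Real.exp_sum]
    refine Real.exp_le_exp.2 (le_of_eq ?_)
    rw [hs, hL, hV, hW, Finset.sum_div, ← Finset.sum_sub_distrib, ← Finset.sum_add_distrib]
    exact Finset.sum_congr rfl fun i _ => by ring
  have hq' : |s - L| ≤ D * σ ^ 2 := by
    have e : s - L = - V / 2 + W := by rw [hs]; ring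
    have h3 : q * σ ^ 3 ≤ q * (σ ^ 2 * R) := by
      refine mul_le_mul_of_nonneg_left ?_ hq0
      nlinarith [sq_nonneg σ]
    rw [abs_le] at bW ⊢
    rw [e, hD]
    constructor <;> nlinarith [mul_nonneg hq0 (sq_nonneg σ)]
  have hsσ : |s| ≤ H * σ := by
    have : |s| ≤ |L| + |s - L| := by
      have := abs_add_le L (s - L)
      simpa using this
    have h3 : D * σ ^ 2 ≤ D * (R * σ) := mul_le_mul_of_nonneg_left (by nlinarith) hD0
    rw [hH]
    nlinarith
  have hsq : s ^ 2 ≤ L ^ 2 + (2 * q * D + D ^ 2 * R) * σ ^ 3 := by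
    have e : s ^ 2 = L ^ 2 + 2 * (L * (s - L)) + (s - L) ^ 2 := by ring
    have h1 : L * (s - L) ≤ q * σ * (D * σ ^ 2) := by
      refine (le_abs_self _).trans ?_
      rw [abs_mul]
      exact mul_le_mul bL hq' (abs_nonneg _) (by positivity)
    have h2 : (s - L) ^ 2 ≤ (D * σ ^ 2) ^ 2 := by
      rw [← sq_abs]
      exact pow_le_pow_left₀ (abs_nonneg _) hq' 2
    have h3 : (D * σ ^ 2) ^ 2 ≤ D ^ 2 * R * σ ^ 3 := by
      have : D ^ 2 * σ ^ 3 * σ ≤ D ^ 2 * σ ^ 3 * R :=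
        mul_le_mul_of_nonneg_left hηR (by positivity)
      nlinarith
    rw [e]
    nlinarith
  have hcub : |s| ^ 3 * Real.exp |s| ≤ H ^ 3 * Real.exp (H * R) * σ ^ 3 := by
    have h1 : |s| ^ 3 ≤ (H * σ) ^ 3 := pow_le_pow_left₀ (abs_nonneg _) hsσ 3
    have h2 : Real.exp |s| ≤ Real.exp (H * R) :=
      Real.exp_le_exp.2 (hsσ.trans (mul_le_mul_of_nonneg_left hηR hH0))
    calc _ ≤ (H * σ) ^ 3 * Real.exp (H * R) :=
          mul_le_mul h1 h2 (Real.exp_pos _).le (by positivity)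
      _ = _ := by ring
  have hfin := exp_le_quadratic_add s
  have hW' := (abs_le.1 bW).2
  calc _ ≤ Real.exp s := hlog
    _ ≤ 1 + s + s ^ 2 / 2 + |s| ^ 3 * Real.exp |s| := hfin
    _ ≤ 1 + (L - V / 2 + q * σ ^ 3) + (L ^ 2 + (2 * q * D + D ^ 2 * R) * σ ^ 3) / 2
        + H ^ 3 * Real.exp (H * R) * σ ^ 3 := by
      rw [hs] at *
      linarith
    _ = _ := by ring

/-- Replacing increments by their linear parts in the quadratic form costs third order. -/
lemma sq_sum_sub_le {ι : Type*} [Fintype ι] (p : ι → ℝ) (hp : ∀ i, 0 ≤ p i) {D ε θ : ℝ}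
    (hε : 0 ≤ ε) (hε1 : ε ≤ 1) (hD : 0 ≤ D) (hθ : 0 ≤ θ) (η q : ι → ℝ)
    (h1 : ∀ i, |η i - ε * q i| ≤ D * ε ^ 2 * θ) (h2 : ∀ i, |q i| ≤ D * θ) :
    (∑ i, p i * η i) ^ 2 - ∑ i, p i * η i ^ 2 ≤
      ε ^ 2 * ((∑ i, p i * q i) ^ 2 - ∑ i, p i * q i ^ 2) +
        (3 * (∑ i, p i) ^ 2 + 2 * ∑ i, p i) * D ^ 2 * ε ^ 3 * θ ^ 2 := by
  set P := ∑ i, p i with hP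
  have hP0 : 0 ≤ P := Finset.sum_nonneg fun i _ => hp i
  set S := ∑ i, p i * η i with hS
  set Q := ∑ i, p i * q i with hQ
  have bρ : |S - ε * Q| ≤ P * (D * ε ^ 2 * θ) := by
    rw [hS, hQ, hP, Finset.mul_sum, ← Finset.sum_sub_distrib, Finset.sum_mul]
    refine (Finset.abs_sum_le_sum_abs _ _).trans (Finset.sum_le_sum fun i _ => ?_)
    have : p i * η i - ε * (p i * q i) = p i * (η i - ε * q i) := by ring
    rw [this, abs_mul, abs_of_nonneg (hp i)]
    exact mul_le_mul_of_nonneg_left (h1 i) (hp i)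
  have bQ : |Q| ≤ P * (D * θ) := by
    rw [hQ, hP, Finset.sum_mul]
    refine (Finset.abs_sum_le_sum_abs _ _).trans (Finset.sum_le_sum fun i _ => ?_)
    rw [abs_mul, abs_of_nonneg (hp i)]
    exact mul_le_mul_of_nonneg_left (h2 i) (hp i)
  have hSq : S ^ 2 ≤ ε ^ 2 * Q ^ 2 + 3 * P ^ 2 * (D ^ 2 * ε ^ 3 * θ ^ 2) := by
    have e : S ^ 2 = ε ^ 2 * Q ^ 2 + 2 * ε * (Q * (S - ε * Q)) + (S - ε * Q) ^ 2 := by ring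
    have a1 : Q * (S - ε * Q) ≤ P * (D * θ) * (P * (D * ε ^ 2 * θ)) := by
      refine (le_abs_self _).trans ?_
      rw [abs_mul]
      exact mul_le_mul bQ bρ (abs_nonneg _) (by positivity)
    have a2 : (S - ε * Q) ^ 2 ≤ (P * (D * ε ^ 2 * θ)) ^ 2 := by
      rw [← sq_abs]
      exact pow_le_pow_left₀ (abs_nonneg _) bρ 2
    have a3 : (P * (D * ε ^ 2 * θ)) ^ 2 ≤ P ^ 2 * (D ^ 2 * ε ^ 3 * θ ^ 2) := by
      have : P ^ 2 * (D ^ 2 * ε ^ 3 * θ ^ 2) * ε ≤ P ^ 2 * (D ^ 2 * ε ^ 3 * θ ^ 2) * 1 :=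
        mul_le_mul_of_nonneg_left hε1 (by positivity)
      nlinarith
    have a4 := mul_le_mul_of_nonneg_left a1 (by positivity : 0 ≤ 2 * ε)
    rw [e]
    nlinarith
  have hV : ε ^ 2 * ∑ i, p i * q i ^ 2 - 2 * P * (D ^ 2 * ε ^ 3 * θ ^ 2)
      ≤ ∑ i, p i * η i ^ 2 := by
    rw [hP, Finset.mul_sum, Finset.mul_sum, Finset.sum_mul, ← Finset.sum_sub_distrib]
    refine Finset.sum_le_sum fun i _ => ?_
    have a1 : -(q i * (η i - ε * q i)) ≤ D * θ * (D * ε ^ 2 * θ) := by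
      refine (neg_le_abs _).trans ?_
      rw [abs_mul]
      exact mul_le_mul (h2 i) (h1 i) (abs_nonneg _) (by positivity)
    have a2 : ε ^ 2 * q i ^ 2 - 2 * (D ^ 2 * ε ^ 3 * θ ^ 2) ≤ η i ^ 2 := by
      have a4 := mul_le_mul_of_nonneg_left a1 (by positivity : 0 ≤ 2 * ε)
      nlinarith [sq_nonneg (η i - ε * q i)]
    have := mul_le_mul_of_nonneg_left a2 (hp i)
    linarith
  linarith


lemma integral_inner_sq (c : E) : ∫ z, ⟪c, z⟫ ^ 2 ∂(stdGaussian E) = ‖c‖ ^ 2 := by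
  have h := ProbabilityTheory.variance_dual_stdGaussian (innerSL ℝ c)
  rw [innerSL_apply_norm, ProbabilityTheory.variance_of_integral_eq_zero
    (innerSL ℝ c).continuous.aemeasurable
    (ProbabilityTheory.integral_strongDual_stdGaussian _)] at h
  simpa using h

lemma integrable_norm_pow (n : ℕ) : Integrable (fun z => ‖z‖ ^ n) (stdGaussian E) := by
  rcases Nat.eq_zero_or_pos n with rfl | hn
  · simp
  · have := (ProbabilityTheory.IsGaussian.memLp_id (stdGaussian E) (n : ℝ≥0∞)
      (by simp)).integrable_norm_pow (by omega)
    simpa using this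

lemma integrable_inner (c : E) : Integrable (fun z => ⟪c, z⟫) (stdGaussian E) := by
  refine Integrable.mono' ((integrable_norm_pow (E := E) 1).const_mul ‖c‖)
    (by fun_prop) (Filter.Eventually.of_forall fun z => ?_)
  simpa using norm_inner_le_norm (𝕜 := ℝ) c z

lemma integrable_inner_sq (c : E) : Integrable (fun z => ⟪c, z⟫ ^ 2) (stdGaussian E) := by
  refine Integrable.mono' ((integrable_norm_pow (E := E) 2).const_mul (‖c‖ ^ 2))
    (by fun_prop) (Filter.Eventually.of_forall fun z => ?_)
  rw [norm_pow, ← mul_pow]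
  exact pow_le_pow_left₀ (norm_nonneg _) (norm_inner_le_norm (𝕜 := ℝ) c z) 2

lemma integral_inner_stdGaussian (c : E) : ∫ z, ⟪c, z⟫ ∂(stdGaussian E) = 0 := by
  simpa using ProbabilityTheory.integral_strongDual_stdGaussian (innerSL ℝ c)

section Data

variable {ι : Type*} [Fintype ι] {G : ι → Type*} [∀ i, NormedAddCommGroup (G i)]
  [∀ i, InnerProductSpace ℝ (G i)] [∀ i, FiniteDimensional ℝ (G i)]
  [∀ i, MeasurableSpace (G i)] [∀ i, BorelSpace (G i)]

/-- Duality between the two forms of the covariance domination `T ≤ P⁻¹`. -/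
lemma norm_sum_adjoint_sq_le (A : ∀ i, E →L[ℝ] G i) (p : ι → ℝ) (hp : ∀ i, 0 ≤ p i)
    (hAp : ∀ z, ∑ i, p i * ‖A i z‖ ^ 2 ≤ ‖z‖ ^ 2) (b : ∀ i, G i) :
    ‖∑ i, p i • ContinuousLinearMap.adjoint (A i) (b i)‖ ^ 2 ≤ ∑ i, p i * ‖b i‖ ^ 2 := by
  set y := ∑ i, p i • ContinuousLinearMap.adjoint (A i) (b i) with hy
  have h1 : ‖y‖ ^ 2 = ∑ i, p i * ⟪b i, A i y⟫ := by
    rw [← real_inner_self_eq_norm_sq]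
    conv_lhs => rw [hy, sum_inner, ← hy]
    exact Finset.sum_congr rfl fun i _ => by
      rw [real_inner_smul_left, ContinuousLinearMap.adjoint_inner_left]
  have h2 : ∑ i, p i * ⟪b i, A i y⟫ ≤ ∑ i, p i * ((‖b i‖ ^ 2 + ‖A i y‖ ^ 2) / 2) := by
    refine Finset.sum_le_sum fun i _ => mul_le_mul_of_nonneg_left ?_ (hp i)
    have := real_inner_le_norm (b i) (A i y)
    nlinarith [sq_nonneg (‖b i‖ - ‖A i y‖)]
  have h3 : ∑ i, p i * ((‖b i‖ ^ 2 + ‖A i y‖ ^ 2) / 2)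
      = (∑ i, p i * ‖b i‖ ^ 2) / 2 + (∑ i, p i * ‖A i y‖ ^ 2) / 2 := by
    rw [Finset.sum_div, Finset.sum_div, ← Finset.sum_add_distrib]
    exact Finset.sum_congr rfl fun i _ => by ring
  linarith [hAp y]

/-- The infinitesimal form of the inequality. -/
lemma integral_sq_sum_sub_nonpos (A : ∀ i, E →L[ℝ] G i)
    (hA : ∀ i, (stdGaussian E).map (A i) = stdGaussian (G i))
    (p : ι → ℝ) (hp : ∀ i, 0 ≤ p i)
    (hAp : ∀ z, ∑ i, p i * ‖A i z‖ ^ 2 ≤ ‖z‖ ^ 2) (b : ∀ i, G i) :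
    Integrable (fun z => (∑ i, p i * ⟪b i, A i z⟫) ^ 2 - ∑ i, p i * ⟪b i, A i z⟫ ^ 2)
      (stdGaussian E) ∧
    ∫ z, ((∑ i, p i * ⟪b i, A i z⟫) ^ 2 - ∑ i, p i * ⟪b i, A i z⟫ ^ 2) ∂(stdGaussian E) ≤ 0 := by
  have e1 : ∀ z, (∑ i, p i * ⟪b i, A i z⟫) ^ 2
      = ⟪∑ i, p i • ContinuousLinearMap.adjoint (A i) (b i), z⟫ ^ 2 := by
    intro z
    rw [sum_inner]
    congr 1
    exact Finset.sum_congr rfl fun i _ => by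
      rw [real_inner_smul_left, ContinuousLinearMap.adjoint_inner_left]
  have i2 : ∀ i, Integrable (fun z => p i * ⟪b i, A i z⟫ ^ 2) (stdGaussian E) := by
    intro i
    simp_rw [← ContinuousLinearMap.adjoint_inner_left]
    exact (integrable_inner_sq _).const_mul _
  have e2 : ∀ i, ∫ z, p i * ⟪b i, A i z⟫ ^ 2 ∂(stdGaussian E) = p i * ‖b i‖ ^ 2 := by
    intro i
    rw [integral_const_mul, ← integral_inner_sq (b i), ← hA i,
      integral_map (A i).continuous.aemeasurable (by fun_prop)]
  simp_rw [e1]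
  have i1 := integrable_inner_sq (∑ i, p i • ContinuousLinearMap.adjoint (A i) (b i))
  have i3 := integrable_finsetSum Finset.univ fun i _ => i2 i
  refine ⟨i1.sub i3, ?_⟩
  rw [integral_sub i1 i3, integral_finsetSum _ fun i _ => i2 i, integral_inner_sq]
  simp_rw [e2]
  linarith [norm_sum_adjoint_sq_le A p hp hAp b]

end Data

/-- Gaussian averaging at scale `ε`. -/
def gaussAverage (ε : ℝ) (f : F → ℝ) (x : F) : ℝ := ∫ w, f (x + ε • w) ∂(stdGaussian F)

/-- Functions with values in `[δ, M]` and uniformly controlled first order expansion. -/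
structure Tame (δ M K : ℝ) (f : F → ℝ) : Prop where
  lower : ∀ x, δ ≤ f x
  upper : ∀ x, f x ≤ M
  cont : Continuous f
  grad : ∃ L : F → F, Continuous L ∧ (∀ x, ‖L x‖ ≤ K) ∧
    ∀ x y, |f (x + y) - f x - ⟪L x, y⟫| ≤ K * ‖y‖ ^ 2

lemma Tame.abs_le {δ M K : ℝ} {f : F → ℝ} (hf : Tame δ M K f) (x : F) : ‖f x‖ ≤ max |δ| |M| := by
  rw [Real.norm_eq_abs]
  exact abs_le_max_abs_abs (hf.lower x) (hf.upper x)

lemma Tame.integrable {δ M K : ℝ} {f : F → ℝ} (hf : Tame δ M K f) (x : F) (ε : ℝ) :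
    Integrable (fun w => f (x + ε • w)) (stdGaussian F) :=
  Integrable.of_bound (hf.cont.comp (by fun_prop)).aestronglyMeasurable (max |δ| |M|)
    (Filter.Eventually.of_forall fun _ => hf.abs_le _)

lemma Tame.average {δ M K : ℝ} {f : F → ℝ} (hf : Tame δ M K f) (ε : ℝ) :
    Tame δ M K (gaussAverage ε f) := by
  obtain ⟨L, hLc, hLK, hL⟩ := hf.grad
  have iL : ∀ x, Integrable (fun w => L (x + ε • w)) (stdGaussian F) := fun x =>
    Integrable.of_bound (hLc.comp (by fun_prop)).aestronglyMeasurable K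
      (Filter.Eventually.of_forall fun _ => hLK _)
  refine ⟨fun x => ?_, fun x => ?_, ?_, fun x => ∫ w, L (x + ε • w) ∂(stdGaussian F), ?_, ?_, ?_⟩
  · have := integral_mono (integrable_const δ) (hf.integrable x ε) fun w => hf.lower _
    simpa [gaussAverage] using this
  · have := integral_mono (hf.integrable x ε) (integrable_const M) fun w => hf.upper _
    simpa [gaussAverage] using this
  · exact continuous_of_dominated (fun x => (hf.cont.comp (by fun_prop)).aestronglyMeasurable)
      (fun x => Filter.Eventually.of_forall fun w => hf.abs_le _) (integrable_const _)
      (Filter.Eventually.of_forall fun w => hf.cont.comp (by fun_prop))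
  · exact continuous_of_dominated (fun x => (hLc.comp (by fun_prop)).aestronglyMeasurable)
      (fun x => Filter.Eventually.of_forall fun w => hLK _) (integrable_const _)
      (Filter.Eventually.of_forall fun w => hLc.comp (by fun_prop))
  · intro x
    have := norm_integral_le_of_norm_le_const (μ := stdGaussian F)
      (Filter.Eventually.of_forall fun w => hLK (x + ε • w))
    simpa using this
  · intro x y
    have e : gaussAverage ε f (x + y) - gaussAverage ε f x
        - ⟪∫ w, L (x + ε • w) ∂(stdGaussian F), y⟫
        = ∫ w, (f (x + y + ε • w) - f (x + ε • w) - ⟪L (x + ε • w), y⟫) ∂(stdGaussian F) := by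
      have hsub : Integrable (fun w => f (x + y + ε • w) - f (x + ε • w)) (stdGaussian F) :=
        (hf.integrable _ _).sub (hf.integrable _ _)
      rw [integral_sub hsub ((iL x).inner_const y),
        integral_sub (hf.integrable _ _) (hf.integrable _ _), real_inner_comm,
        ← integral_inner (iL x)]
      simp_rw [real_inner_comm y]
      rfl
    rw [e]
    have := norm_integral_le_of_norm_le_const (μ := stdGaussian F)
      (f := fun w => f (x + y + ε • w) - f (x + ε • w) - ⟪L (x + ε • w), y⟫) (C := K * ‖y‖ ^ 2)
      (Filter.Eventually.of_forall fun w => by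
        rw [add_right_comm]
        exact hL _ _)
    simpa using this


lemma integrable_one_add_norm_sq_pow_three :
    Integrable (fun z => (1 + ‖z‖ ^ 2) ^ 3) (stdGaussian E) := by
  have e : ∀ z : E, (1 + ‖z‖ ^ 2) ^ 3 = 1 + 3 * ‖z‖ ^ 2 + 3 * ‖z‖ ^ 4 + ‖z‖ ^ 6 := fun z => by ring
  simp_rw [e]
  exact (((integrable_const 1).add ((integrable_norm_pow 2).const_mul 3)).add
    ((integrable_norm_pow 4).const_mul 3)).add (integrable_norm_pow 6)

/-- First order expansion of a tame function around its Gaussian average. -/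
lemma Tame.abs_sub_average_le {δ M K ε : ℝ} (hε : 0 ≤ ε) {f : F → ℝ} (hf : Tame δ M K f) (x : F) :
    ∃ v : F, ‖v‖ ≤ K ∧ ∀ y, |f (x + ε • y) - gaussAverage ε f x - ε * ⟪v, y⟫| ≤
      K * ε ^ 2 * (‖y‖ ^ 2 + ∫ w, ‖w‖ ^ 2 ∂(stdGaussian F)) := by
  obtain ⟨L, hLc, hLK, hL⟩ := hf.grad
  refine ⟨L x, hLK x, ?_⟩
  have h1 : ∀ y, |f (x + ε • y) - f x - ε * ⟪L x, y⟫| ≤ K * ε ^ 2 * ‖y‖ ^ 2 := by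
    intro y
    have := hL x (ε • y)
    rw [real_inner_smul_right, norm_smul, Real.norm_of_nonneg hε, mul_pow] at this
    linarith
  have h2 : |gaussAverage ε f x - f x| ≤ K * ε ^ 2 * ∫ w, ‖w‖ ^ 2 ∂(stdGaussian F) := by
    have i1 : Integrable (fun w => f (x + ε • w) - f x) (stdGaussian F) :=
      (hf.integrable x ε).sub (integrable_const _)
    have e : gaussAverage ε f x - f x
        = ∫ w, (f (x + ε • w) - f x - ε * ⟪L x, w⟫) ∂(stdGaussian F) := by
      rw [integral_sub i1 ((integrable_inner _).const_mul ε),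
        integral_sub (hf.integrable x ε) (integrable_const _), integral_const_mul,
        integral_inner_stdGaussian]
      simp [gaussAverage]
    rw [e, ← integral_const_mul, ← Real.norm_eq_abs]
    exact norm_integral_le_of_norm_le ((integrable_norm_pow 2).const_mul _)
      (Filter.Eventually.of_forall fun w => h1 w)
  intro y
  have e : f (x + ε • y) - gaussAverage ε f x - ε * ⟪L x, y⟫
      = (f (x + ε • y) - f x - ε * ⟪L x, y⟫) - (gaussAverage ε f x - f x) := by ring
  rw [e]
  refine (abs_sub _ _).trans ?_
  linarith [h1 y]

section Data

variable {ι : Type*} [Fintype ι] {G : ι → Type*} [∀ i, NormedAddCommGroup (G i)]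
  [∀ i, InnerProductSpace ℝ (G i)] [∀ i, FiniteDimensional ℝ (G i)]
  [∀ i, MeasurableSpace (G i)] [∀ i, BorelSpace (G i)]

set_option maxHeartbeats 1600000 in
/-- The inequality at small scale `ε`, up to a relative error of order `ε³`. -/
lemma exists_integral_prod_le_of_small_scale (A : ∀ i, E →L[ℝ] G i)
    (hA : ∀ i, (stdGaussian E).map (A i) = stdGaussian (G i))
    (p : ι → ℝ) (hp : ∀ i, 0 ≤ p i)
    (hAp : ∀ z, ∑ i, p i * ‖A i z‖ ^ 2 ≤ ‖z‖ ^ 2) {δ M K : ℝ} (hδ : 0 < δ) (hK : 0 ≤ K) :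
    ∃ C, 0 ≤ C ∧ ∀ ε : ℝ, 0 ≤ ε → ε ≤ 1 → ∀ f : ∀ i, G i → ℝ, (∀ i, Tame δ M K (f i)) →
      ∀ x : ∀ i, G i,
        ∫ z, ∏ i, f i (x i + ε • A i z) ^ p i ∂(stdGaussian E) ≤
          (1 + C * ε ^ 3) * ∏ i, gaussAverage ε (f i) (x i) ^ p i := by
  set n : ℝ := (Fintype.card ι : ℝ) with hn
  obtain ⟨C₁, hC₁, hT⟩ := exists_prod_rpow_le p hp
    (R := n * (|M| / δ + 1)) (by positivity)
  set N := ∑ i, ‖A i‖ with hN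
  have hN0 : 0 ≤ N := Finset.sum_nonneg fun i _ => norm_nonneg _
  have hAN : ∀ i z, ‖A i z‖ ≤ N * ‖z‖ := fun i z => ((A i).le_opNorm z).trans
    (mul_le_mul_of_nonneg_right (Finset.single_le_sum (f := fun i => ‖A i‖)
      (fun i _ => norm_nonneg _) (Finset.mem_univ i)) (norm_nonneg _))
  have hw0 : ∀ i, 0 ≤ ∫ w, ‖w‖ ^ 2 ∂(stdGaussian (G i)) := fun i =>
    integral_nonneg fun w => by positivity
  set m₂ := ∑ i, ∫ w, ‖w‖ ^ 2 ∂(stdGaussian (G i)) with hm₂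
  have hm0 : 0 ≤ m₂ := Finset.sum_nonneg fun i _ => hw0 i
  have hwm : ∀ i, ∫ w, ‖w‖ ^ 2 ∂(stdGaussian (G i)) ≤ m₂ := fun i =>
    Finset.single_le_sum (f := fun i => ∫ w, ‖w‖ ^ 2 ∂(stdGaussian (G i)))
      (fun i _ => hw0 i) (Finset.mem_univ i)
  set D := K / δ * (m₂ + N ^ 2 + N) with hD
  have hD0 : 0 ≤ D := by positivity
  set C₂ := (3 * (∑ i, p i) ^ 2 + 2 * ∑ i, p i) * D ^ 2 with hC₂
  have hsp : 0 ≤ ∑ i, p i := Finset.sum_nonneg fun i _ => hp i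
  have hC₂0 : 0 ≤ C₂ := by positivity
  set C₃ := C₂ / 2 + C₁ * (n * (2 * D)) ^ 3 with hC₃
  have hC₃0 : 0 ≤ C₃ := by positivity
  have hΘ0 : 0 ≤ ∫ z, (1 + ‖z‖ ^ 2) ^ 3 ∂(stdGaussian E) := integral_nonneg fun z => by positivity
  refine ⟨C₃ * ∫ z, (1 + ‖z‖ ^ 2) ^ 3 ∂(stdGaussian E), by positivity, ?_⟩
  intro ε hε hε1 f hf x
  set a : ι → ℝ := fun i => gaussAverage ε (f i) (x i) with ha
  have haδ : ∀ i, δ ≤ a i := fun i => ((hf i).average ε).lower _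
  have ha0 : ∀ i, 0 < a i := fun i => hδ.trans_le (haδ i)
  choose v hvK hv using fun i => (hf i).abs_sub_average_le hε (x i)
  set b : ∀ i, G i := fun i => (a i)⁻¹ • v i with hb
  set η : E → ι → ℝ := fun z i => f i (x i + ε • A i z) / a i - 1 with hη
  have hηeq : ∀ z i, f i (x i + ε • A i z) = a i * (1 + η z i) := by
    intro z i
    have := (ha0 i).ne'
    simp only [hη]
    field_simp
    ring
  have hη1 : ∀ z i, -1 < η z i := by
    intro z i
    have : 0 < f i (x i + ε • A i z) / a i :=
      div_pos (hδ.trans_le ((hf i).lower _)) (ha0 i)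
    simp only [hη]
    linarith
  have hηR : ∀ z, ∑ i, |η z i| ≤ n * (|M| / δ + 1) := by
    intro z
    have : ∀ i ∈ Finset.univ, |η z i| ≤ |M| / δ + 1 := by
      intro i _
      have h1 : f i (x i + ε • A i z) / a i ≤ |M| / δ :=
        div_le_div₀ (abs_nonneg _) (((hf i).upper _).trans (le_abs_self _)) hδ (haδ i)
      have h2 := hη1 z i
      rw [abs_le]
      simp only [hη] at h2 ⊢
      have : 0 ≤ |M| / δ := by positivity
      constructor <;> linarith
    have := Finset.sum_le_card_nsmul _ _ _ this
    rwa [nsmul_eq_mul, Finset.card_univ] at this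
  have hq : ∀ z i, |⟪b i, A i z⟫| ≤ D * (1 + ‖z‖ ^ 2) := by
    intro z i
    have h1 : ‖b i‖ ≤ K / δ := by
      rw [hb, norm_smul, norm_inv, Real.norm_of_nonneg (ha0 i).le, inv_mul_eq_div]
      exact div_le_div₀ hK (hvK i) hδ (haδ i)
    calc |⟪b i, A i z⟫| ≤ ‖b i‖ * ‖A i z‖ := abs_real_inner_le_norm _ _
      _ ≤ K / δ * (N * ‖z‖) := mul_le_mul h1 (hAN i z) (norm_nonneg _) (by positivity)
      _ ≤ K / δ * ((m₂ + N ^ 2 + N) * (1 + ‖z‖ ^ 2)) := by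
        refine mul_le_mul_of_nonneg_left ?_ (by positivity)
        refine mul_le_mul (by nlinarith) ?_ (norm_nonneg _) (by positivity)
        nlinarith [sq_nonneg (‖z‖ - 1)]
      _ = _ := by rw [hD]; ring
  have hηq : ∀ z i, |η z i - ε * ⟪b i, A i z⟫| ≤ D * ε ^ 2 * (1 + ‖z‖ ^ 2) := by
    intro z i
    have h1 := hv i (A i z)
    have e : η z i - ε * ⟪b i, A i z⟫
        = (f i (x i + ε • A i z) - a i - ε * ⟪v i, A i z⟫) / a i := by
      have := (ha0 i).ne'
      simp only [hη, hb, real_inner_smul_left]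
      field_simp
    rw [e, abs_div, abs_of_pos (ha0 i)]
    have h2 : K * ε ^ 2 * (‖A i z‖ ^ 2 + ∫ w, ‖w‖ ^ 2 ∂(stdGaussian (G i)))
        ≤ K * ε ^ 2 * ((m₂ + N ^ 2 + N) * (1 + ‖z‖ ^ 2)) := by
      refine mul_le_mul_of_nonneg_left ?_ (by positivity)
      have h3 := pow_le_pow_left₀ (norm_nonneg _) (hAN i z) 2
      rw [mul_pow] at h3
      nlinarith [hwm i, sq_nonneg ‖z‖, mul_nonneg hm0 (sq_nonneg ‖z‖),
        mul_nonneg hN0 (sq_nonneg ‖z‖), sq_nonneg N]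
    refine (div_le_div₀ (by positivity) (h1.trans h2) hδ (haδ i)).trans (le_of_eq ?_)
    rw [hD]
    ring
  have hpt : ∀ z, ∏ i, (1 + η z i) ^ p i ≤ 1 + ∑ i, p i * η z i
      + ε ^ 2 / 2 * ((∑ i, p i * ⟪b i, A i z⟫) ^ 2 - ∑ i, p i * ⟪b i, A i z⟫ ^ 2)
      + C₃ * ε ^ 3 * (1 + ‖z‖ ^ 2) ^ 3 := by
    intro z
    have h1 := hT (η z) (hη1 z) (hηR z)
    have hΘ1 : 1 ≤ 1 + ‖z‖ ^ 2 := by nlinarith [sq_nonneg ‖z‖]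
    have h2 := sq_sum_sub_le p hp hε hε1 hD0 (by linarith : 0 ≤ 1 + ‖z‖ ^ 2) (η z)
      (fun i => ⟪b i, A i z⟫) (hηq z) (hq z)
    rw [← hC₂] at h2
    have h3 : ∑ i, |η z i| ≤ n * (2 * D) * (ε * (1 + ‖z‖ ^ 2)) := by
      have : ∀ i ∈ Finset.univ, |η z i| ≤ 2 * D * (ε * (1 + ‖z‖ ^ 2)) := by
        intro i _
        have e : η z i = (η z i - ε * ⟪b i, A i z⟫) + ε * ⟪b i, A i z⟫ := by ring
        rw [e]
        refine (abs_add_le _ _).trans ?_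
        rw [abs_mul, abs_of_nonneg hε]
        have h4 := mul_le_mul_of_nonneg_left (hq z i) hε
        have h5 : D * ε ^ 2 * (1 + ‖z‖ ^ 2) ≤ D * ε * (1 + ‖z‖ ^ 2) := by
          refine mul_le_mul_of_nonneg_right (mul_le_mul_of_nonneg_left ?_ hD0) (by linarith)
          nlinarith
        linarith [hηq z i]
      have := Finset.sum_le_card_nsmul _ _ _ this
      rw [nsmul_eq_mul, Finset.card_univ, ← hn] at this
      linarith
    have h4 : C₁ * (∑ i, |η z i|) ^ 3
        ≤ C₁ * (n * (2 * D)) ^ 3 * ε ^ 3 * (1 + ‖z‖ ^ 2) ^ 3 := by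
      have := mul_le_mul_of_nonneg_left (pow_le_pow_left₀
        (Finset.sum_nonneg fun i _ => abs_nonneg (η z i)) h3 3) hC₁
      refine this.trans (le_of_eq (by ring))
    have h5 : C₂ * ε ^ 3 * (1 + ‖z‖ ^ 2) ^ 2 ≤ C₂ * ε ^ 3 * (1 + ‖z‖ ^ 2) ^ 3 :=
      mul_le_mul_of_nonneg_left (pow_le_pow_right₀ hΘ1 (by norm_num)) (by positivity)
    rw [hC₃]
    linarith
  have hfi : ∀ i, Integrable (fun z => f i (x i + ε • A i z)) (stdGaussian E) := fun i =>
    Integrable.of_bound ((hf i).cont.comp (by fun_prop)).aestronglyMeasurable (max |δ| |M|)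
      (Filter.Eventually.of_forall fun _ => (hf i).abs_le _)
  have hηi : ∀ i, Integrable (fun z => p i * η z i) (stdGaussian E) := fun i =>
    (((hfi i).div_const (a i)).sub (integrable_const 1)).const_mul _
  have hη0 : ∀ i, ∫ z, p i * η z i ∂(stdGaussian E) = 0 := by
    intro i
    rw [integral_const_mul, integral_sub ((hfi i).div_const (a i)) (integrable_const 1),
      integral_div]
    have : ∫ z, f i (x i + ε • A i z) ∂(stdGaussian E) = a i := by
      have hc : Continuous fun w => f i (x i + ε • w) := (hf i).cont.comp (by fun_prop)
      change _ = ∫ w, f i (x i + ε • w) ∂(stdGaussian (G i))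
      rw [← hA i, integral_map (A i).continuous.aemeasurable hc.aestronglyMeasurable]
    rw [this, div_self (ha0 i).ne']
    simp
  obtain ⟨hQi, hQ0⟩ := integral_sq_sum_sub_nonpos A hA p hp hAp b
  have hsum := integrable_finsetSum Finset.univ fun i _ => hηi i
  have i1 : Integrable (fun z => 1 + ∑ i, p i * η z i) (stdGaussian E) :=
    (integrable_const 1).add hsum
  have i2 := hQi.const_mul (ε ^ 2 / 2)
  have i3 := (integrable_one_add_norm_sq_pow_three (E := E)).const_mul (C₃ * ε ^ 3)
  have i12 : Integrable (fun z => 1 + ∑ i, p i * η z i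
      + ε ^ 2 / 2 * ((∑ i, p i * ⟪b i, A i z⟫) ^ 2 - ∑ i, p i * ⟪b i, A i z⟫ ^ 2))
      (stdGaussian E) := i1.add i2
  have hmain : ∫ z, ∏ i, (1 + η z i) ^ p i ∂(stdGaussian E)
      ≤ 1 + C₃ * (∫ z, (1 + ‖z‖ ^ 2) ^ 3 ∂(stdGaussian E)) * ε ^ 3 := by
    have h := integral_mono_of_nonneg (μ := stdGaussian E) (Filter.Eventually.of_forall fun z =>
      Finset.prod_nonneg fun i _ => Real.rpow_nonneg (by linarith [hη1 z i]) _)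
      (i12.add i3) (Filter.Eventually.of_forall hpt)
    have e : ∫ z, (1 + ∑ i, p i * η z i
        + ε ^ 2 / 2 * ((∑ i, p i * ⟪b i, A i z⟫) ^ 2 - ∑ i, p i * ⟪b i, A i z⟫ ^ 2)
        + C₃ * ε ^ 3 * (1 + ‖z‖ ^ 2) ^ 3) ∂(stdGaussian E)
        = 1 + ε ^ 2 / 2 * (∫ z, ((∑ i, p i * ⟪b i, A i z⟫) ^ 2
          - ∑ i, p i * ⟪b i, A i z⟫ ^ 2) ∂(stdGaussian E))
          + C₃ * ε ^ 3 * ∫ z, (1 + ‖z‖ ^ 2) ^ 3 ∂(stdGaussian E) := by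
      rw [integral_add i12 i3, integral_add i1 i2, integral_add (integrable_const 1) hsum,
        integral_finsetSum _ fun i _ => hηi i, integral_const_mul, integral_const_mul]
      simp [hη0]
    have h' := h.trans (le_of_eq e)
    have := mul_nonneg (by positivity : 0 ≤ ε ^ 2 / 2) (neg_nonneg.2 hQ0)
    linarith
  have e : ∀ z, ∏ i, f i (x i + ε • A i z) ^ p i
      = (∏ i, a i ^ p i) * ∏ i, (1 + η z i) ^ p i := by
    intro z
    rw [← Finset.prod_mul_distrib]
    refine Finset.prod_congr rfl fun i _ => ?_
    rw [hηeq z i, Real.mul_rpow (ha0 i).le (by linarith [hη1 z i])]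
  simp_rw [e]
  rw [integral_const_mul, mul_comm]
  exact mul_le_mul_of_nonneg_right hmain
    (Finset.prod_nonneg fun i _ => Real.rpow_nonneg (ha0 i).le _)

end Data


lemma integral_integral_stdGaussian {a b c : ℝ} (h : a ^ 2 + b ^ 2 = c ^ 2) {g : E → ℝ}
    (hg : Continuous g) {B : ℝ} (hB : ∀ z, ‖g z‖ ≤ B) :
    ∫ z, ∫ w, g (a • z + b • w) ∂(stdGaussian E) ∂(stdGaussian E)
      = ∫ z, g (c • z) ∂(stdGaussian E) := by
  have h1 : ∫ z, g (c • z) ∂(stdGaussian E) = ∫ y, g y ∂((stdGaussian E).map (fun z => c • z)) := by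
    rw [integral_map (by fun_prop) hg.aestronglyMeasurable]
  rw [h1, ← map_prod_stdGaussian h, integral_map (by fun_prop) hg.aestronglyMeasurable,
    integral_prod (fun z : E × E => g (a • z.1 + b • z.2))]
  exact Integrable.of_bound (hg.comp (by fun_prop)).aestronglyMeasurable B
    (Filter.Eventually.of_forall fun _ => hB _)

lemma Tame.average_average {δ M K : ℝ} {f : F → ℝ} (hf : Tame δ M K f) {a b c : ℝ}
    (h : a ^ 2 + b ^ 2 = c ^ 2) (x : F) :
    gaussAverage a (gaussAverage b f) x = gaussAverage c f x := by
  have := integral_integral_stdGaussian h (g := fun y => f (x + y)) (hf.cont.comp (by fun_prop))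
    (fun _ => hf.abs_le _)
  simpa only [gaussAverage, add_assoc] using this

section Data

variable {ι : Type*} [Fintype ι] {G : ι → Type*} [∀ i, NormedAddCommGroup (G i)]
  [∀ i, InnerProductSpace ℝ (G i)] [∀ i, FiniteDimensional ℝ (G i)]
  [∀ i, MeasurableSpace (G i)] [∀ i, BorelSpace (G i)]

lemma Tame.continuous_prod {δ M K : ℝ} (hδ : 0 < δ) {f : ∀ i, G i → ℝ}
    (hf : ∀ i, Tame δ M K (f i)) (p : ι → ℝ) {φ : ∀ i, E → G i} (hφ : ∀ i, Continuous (φ i)) :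
    Continuous (fun z => ∏ i, f i (φ i z) ^ p i) :=
  continuous_finsetProd _ fun i _ => ((hf i).cont.comp (hφ i)).rpow_const
    fun z => Or.inl (hδ.trans_le ((hf i).lower _)).ne'

lemma Tame.norm_prod_le {δ M K : ℝ} (hδ : 0 < δ) {f : ∀ i, G i → ℝ}
    (hf : ∀ i, Tame δ M K (f i)) {p : ι → ℝ} (hp : ∀ i, 0 ≤ p i) (y : ∀ i, G i) :
    ‖∏ i, f i (y i) ^ p i‖ ≤ ∏ i, M ^ p i := by
  have h0 : ∀ i, 0 ≤ f i (y i) := fun i => (hδ.trans_le ((hf i).lower _)).le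
  rw [Real.norm_of_nonneg (Finset.prod_nonneg fun i _ => Real.rpow_nonneg (h0 i) _)]
  exact Finset.prod_le_prod (fun i _ => Real.rpow_nonneg (h0 i) _)
    fun i _ => Real.rpow_le_rpow (h0 i) ((hf i).upper _) (hp i)

/-- Iterating the small-scale inequality. -/
lemma integral_prod_le_of_small_scale_iterate (A : ∀ i, E →L[ℝ] G i)
    (p : ι → ℝ) (hp : ∀ i, 0 ≤ p i) {δ M K C ε : ℝ} (hδ : 0 < δ) (hC : 0 ≤ C) (hε : 0 ≤ ε)
    (hstep : ∀ f : ∀ i, G i → ℝ, (∀ i, Tame δ M K (f i)) → ∀ x : ∀ i, G i,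
        ∫ z, ∏ i, f i (x i + ε • A i z) ^ p i ∂(stdGaussian E) ≤
          (1 + C * ε ^ 3) * ∏ i, gaussAverage ε (f i) (x i) ^ p i) (n : ℕ) :
    ∀ f : ∀ i, G i → ℝ, (∀ i, Tame δ M K (f i)) → ∀ x : ∀ i, G i,
        ∫ z, ∏ i, f i (x i + (√n * ε) • A i z) ^ p i ∂(stdGaussian E) ≤
          (1 + C * ε ^ 3) ^ n * ∏ i, gaussAverage (√n * ε) (f i) (x i) ^ p i := by
  induction n with
  | zero =>
    intro f hf x
    simp [gaussAverage]
  | succ n ih =>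
    intro f hf x
    have hsq : (√n * ε) ^ 2 + ε ^ 2 = (√(n + 1 : ℕ) * ε) ^ 2 := by
      rw [mul_pow, mul_pow, Real.sq_sqrt (by positivity), Real.sq_sqrt (by positivity)]
      push_cast
      ring
    have hcont := Tame.continuous_prod hδ hf p
      (φ := fun i (z : E) => x i + A i z) (fun i => by fun_prop)
    have h1 := integral_integral_stdGaussian hsq hcont
      (fun z => Tame.norm_prod_le hδ hf hp (fun i => x i + A i z))
    simp only [map_add, map_smul, ← add_assoc] at h1
    rw [← h1]
    have hav : ∀ i, Tame δ M K (gaussAverage ε (f i)) := fun i => (hf i).average ε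
    have hmono : ∫ z, ∫ w, ∏ i, f i (x i + (√n * ε) • A i z + ε • A i w) ^ p i ∂(stdGaussian E)
          ∂(stdGaussian E)
        ≤ ∫ z, (1 + C * ε ^ 3) * ∏ i, gaussAverage ε (f i) (x i + (√n * ε) • A i z) ^ p i
          ∂(stdGaussian E) := by
      refine integral_mono_of_nonneg (Filter.Eventually.of_forall fun z => ?_) ?_
        (Filter.Eventually.of_forall fun z => hstep f hf _)
      · exact integral_nonneg fun w => Finset.prod_nonneg fun i _ =>
          Real.rpow_nonneg (hδ.trans_le ((hf i).lower _)).le _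
      · refine Integrable.const_mul ?_ _
        exact Integrable.of_bound (Tame.continuous_prod hδ hav p
          (fun i => by fun_prop)).aestronglyMeasurable _
          (Filter.Eventually.of_forall fun z => Tame.norm_prod_le hδ hav hp _)
    refine hmono.trans ?_
    rw [integral_const_mul, pow_succ' (1 + C * ε ^ 3) n, mul_assoc]
    refine mul_le_mul_of_nonneg_left ?_ (by positivity)
    have := ih _ hav x
    simp_rw [(hf _).average_average hsq] at this
    exact this

/-- Gaussian Brascamp–Lieb inequality for tame functions. -/
lemma integral_prod_le_of_tame (A : ∀ i, E →L[ℝ] G i)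
    (hA : ∀ i, (stdGaussian E).map (A i) = stdGaussian (G i))
    (p : ι → ℝ) (hp : ∀ i, 0 ≤ p i)
    (hAp : ∀ z, ∑ i, p i * ‖A i z‖ ^ 2 ≤ ‖z‖ ^ 2) {δ M K : ℝ} (hδ : 0 < δ) (hK : 0 ≤ K)
    (f : ∀ i, G i → ℝ) (hf : ∀ i, Tame δ M K (f i)) :
    ∫ z, ∏ i, f i (A i z) ^ p i ∂(stdGaussian E) ≤
      ∏ i, (∫ w, f i w ∂(stdGaussian (G i))) ^ p i := by
  obtain ⟨C, hC, hstep⟩ := exists_integral_prod_le_of_small_scale (M := M) A hA p hp hAp hδ hK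
  set J := ∏ i, (∫ w, f i w ∂(stdGaussian (G i))) ^ p i with hJ
  have hJ0 : 0 ≤ J := Finset.prod_nonneg fun i _ => Real.rpow_nonneg
    (integral_nonneg fun w => (hδ.trans_le ((hf i).lower _)).le) _
  have key : ∀ n : ℕ, ∫ z, ∏ i, f i (A i z) ^ p i ∂(stdGaussian E)
      ≤ Real.exp (C * (√((n + 1 : ℕ) : ℝ))⁻¹) * J := by
    intro n
    have hs : 0 < √((n + 1 : ℕ) : ℝ) := Real.sqrt_pos.2 (by positivity)
    have hs1 : 1 ≤ √((n + 1 : ℕ) : ℝ) := Real.one_le_sqrt.2 (by simp)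
    set ε := (√((n + 1 : ℕ) : ℝ))⁻¹ with hε
    have hε0 : 0 ≤ ε := by positivity
    have h := integral_prod_le_of_small_scale_iterate A p hp hδ hC hε0
      (hstep ε hε0 (inv_le_one_of_one_le₀ hs1)) (n + 1) f hf 0
    have hone : √((n + 1 : ℕ) : ℝ) * ε = 1 := mul_inv_cancel₀ hs.ne'
    rw [hone] at h
    simp only [Pi.zero_apply, one_smul, zero_add, gaussAverage] at h
    refine h.trans (mul_le_mul_of_nonneg_right ?_ hJ0)
    have h2 : 1 + C * ε ^ 3 ≤ Real.exp (C * ε ^ 3) := by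
      linarith [Real.add_one_le_exp (C * ε ^ 3)]
    refine (pow_le_pow_left₀ (by positivity) h2 _).trans (le_of_eq ?_)
    rw [← Real.exp_nat_mul]
    congr 1
    have h3 : ((n + 1 : ℕ) : ℝ) * ε ^ 2 = 1 := by
      rw [← Real.sq_sqrt (by positivity : (0 : ℝ) ≤ ((n + 1 : ℕ) : ℝ)), ← mul_pow, hone, one_pow]
    calc ((n + 1 : ℕ) : ℝ) * (C * ε ^ 3) = C * ε * (((n + 1 : ℕ) : ℝ) * ε ^ 2) := by ring
      _ = C * ε := by rw [h3, mul_one]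
  have hlim : Filter.Tendsto (fun n : ℕ => Real.exp (C * (√((n + 1 : ℕ) : ℝ))⁻¹) * J)
      Filter.atTop (nhds (Real.exp (C * 0) * J)) := by
    refine Filter.Tendsto.mul_const _ ((Real.continuous_exp.tendsto _).comp
      (Filter.Tendsto.const_mul _ ?_))
    exact tendsto_inv_atTop_zero.comp (Real.tendsto_sqrt_atTop.comp
      (tendsto_natCast_atTop_atTop.comp (Filter.tendsto_add_atTop_nat 1)))
  have := ge_of_tendsto' hlim key
  simpa using this

end Data

lemma Tame.mono {δ M M' K K' : ℝ} {f : F → ℝ} (hf : Tame δ M K f) (hM : M ≤ M') (hK : K ≤ K') :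
    Tame δ M' K' f := by
  obtain ⟨L, hL, hLK, hLf⟩ := hf.grad
  exact ⟨hf.lower, fun x => (hf.upper x).trans hM, hf.cont, L, hL, fun x => (hLK x).trans hK,
    fun x y => (hLf x y).trans (mul_le_mul_of_nonneg_right hK (sq_nonneg _))⟩

/-- A function with Lipschitz derivative has a first-order expansion with quadratic remainder. -/
lemma abs_sub_sub_fderiv_le {u : F → ℝ} {C : NNReal} (hu : Differentiable ℝ u)
    (hC : LipschitzWith C (fderiv ℝ u)) (x y : F) :
    |u (x + y) - u x - fderiv ℝ u x y| ≤ C * ‖y‖ ^ 2 := by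
  have hx : x ∈ Metric.closedBall x ‖y‖ := Metric.mem_closedBall_self (norm_nonneg _)
  have hxy : x + y ∈ Metric.closedBall x ‖y‖ := by simp [dist_eq_norm]
  have h := (convex_closedBall x ‖y‖).norm_image_sub_le_of_norm_fderiv_le' (𝕜 := ℝ) (f := u)
    (φ := fderiv ℝ u x) (C := C * ‖y‖) (fun z _ => hu z) (fun z hz => ?_) hx hxy
  · rw [Real.norm_eq_abs, add_sub_cancel_left] at h
    rw [sq, ← mul_assoc]
    exact h
  · have := hC.dist_le_mul z x
    rw [dist_eq_norm] at this
    exact this.trans (mul_le_mul_of_nonneg_left (Metric.mem_closedBall.1 hz) C.coe_nonneg)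

/-- Squares of test functions, lifted by a positive constant, are tame. -/
lemma exists_tame_of_contDiff {g : F → ℝ} (hg : ContDiff ℝ (⊤ : ℕ∞) g) (hgs : HasCompactSupport g)
    (δ : ℝ) : ∃ M K : ℝ, 0 ≤ K ∧ Tame δ M K (fun x => g x ^ 2 + δ) := by
  have hv : ContDiff ℝ (⊤ : ℕ∞) (fun x => g x ^ 2) := hg.pow 2
  have hvs : HasCompactSupport (fun x => g x ^ 2) := hgs.comp_left (g := fun t => t ^ 2) (by simp)
  have hd : ContDiff ℝ (⊤ : ℕ∞) (fderiv ℝ (fun x => g x ^ 2)) := hv.fderiv_right (by simp)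
  have hds : HasCompactSupport (fderiv ℝ (fun x => g x ^ 2)) := hvs.fderiv ℝ
  obtain ⟨M, hM⟩ := hv.continuous.bounded_above_of_compact_support hvs
  obtain ⟨K, hK⟩ := hd.continuous.bounded_above_of_compact_support hds
  obtain ⟨C, hC⟩ := hd.lipschitzWith_of_hasCompactSupport hds (by simp)
  have hK0 : 0 ≤ K := (norm_nonneg _).trans (hK 0)
  refine ⟨M + δ, max K C, le_max_of_le_left hK0, ⟨fun x => by nlinarith [sq_nonneg (g x)],
    fun x => ?_, hv.continuous.add continuous_const,
    fun x => (InnerProductSpace.toDual ℝ F).symm (fderiv ℝ (fun x => g x ^ 2) x), ?_, ?_, ?_⟩⟩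
  · have := (le_abs_self _).trans (hM x)
    linarith
  · exact (InnerProductSpace.toDual ℝ F).symm.continuous.comp hd.continuous
  · intro x
    rw [LinearIsometryEquiv.norm_map]
    exact (hK x).trans (le_max_left _ _)
  · intro x y
    rw [InnerProductSpace.toDual_symm_apply]
    have h := abs_sub_sub_fderiv_le (hv.differentiable (by simp)) hC x y
    calc |g (x + y) ^ 2 + δ - (g x ^ 2 + δ) - fderiv ℝ (fun x => g x ^ 2) x y|
        = |g (x + y) ^ 2 - g x ^ 2 - fderiv ℝ (fun x => g x ^ 2) x y| := by ring_nf
      _ ≤ C * ‖y‖ ^ 2 := h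
      _ ≤ max K C * ‖y‖ ^ 2 := mul_le_mul_of_nonneg_right (le_max_right _ _) (sq_nonneg _)

/-- Convergence in `L²` implies convergence of the second moments. -/
lemma tendsto_integral_sq {α : Type*} [MeasurableSpace α] {μ : Measure α} {s : α → ℝ}
    {g : ℕ → α → ℝ} (hs : MemLp s 2 μ) (hg : ∀ k, MemLp (g k) 2 μ)
    (h : Filter.Tendsto (fun k => eLpNorm (g k - s) 2 μ) Filter.atTop (nhds 0)) :
    Filter.Tendsto (fun k => ∫ x, g k x ^ 2 ∂μ) Filter.atTop (nhds (∫ x, s x ^ 2 ∂μ)) := by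
  have hnorm : ∀ {v : α → ℝ} (hv : MemLp v 2 μ), ‖hv.toLp v‖ ^ 2 = ∫ x, v x ^ 2 ∂μ := by
    intro v hv
    rw [← real_inner_self_eq_norm_sq, L2.inner_def]
    refine integral_congr_ae ?_
    filter_upwards [hv.coeFn_toLp] with x hx
    rw [hx, real_inner_self_eq_norm_sq, Real.norm_eq_abs, sq_abs]
  have := ((Lp.tendsto_Lp_iff_tendsto_eLpNorm'' g hg s hs).2 h).norm.pow 2
  simpa only [hnorm] using this

/-- A nonnegative function integrable against the Gaussian measure is approximated by tame ones,
almost everywhere and in integral. -/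
lemma exists_tame_seq {f : F → ℝ} (hf : Integrable f (stdGaussian F)) (hf0 : ∀ x, 0 ≤ f x) :
    ∃ u : ℕ → F → ℝ, (∀ k : ℕ, ∃ M K : ℝ, 0 ≤ K ∧ Tame (1 / ((k : ℝ) + 1)) M K (u k)) ∧
      (∀ᵐ x ∂(stdGaussian F), Filter.Tendsto (fun k => u k x) Filter.atTop (nhds (f x))) ∧
      Filter.Tendsto (fun k => ∫ x, u k x ∂(stdGaussian F)) Filter.atTop
        (nhds (∫ x, f x ∂(stdGaussian F))) := by
  have hsq : ∀ x, √(f x) ^ 2 = f x := fun x => Real.sq_sqrt (hf0 x)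
  have hs : MemLp (fun x => √(f x)) 2 (stdGaussian F) := by
    rw [memLp_two_iff_integrable_sq (Real.continuous_sqrt.comp_aestronglyMeasurable hf.1)]
    simpa only [hsq] using hf
  have hex : ∀ k : ℕ, ∃ g : F → ℝ, HasCompactSupport g ∧ ContDiff ℝ (⊤ : ℕ∞) g ∧
      eLpNorm ((fun x => √(f x)) - g) 2 (stdGaussian F) ≤ ENNReal.ofReal (1 / ((k : ℝ) + 1)) :=
    fun k => hs.exist_eLpNorm_sub_le (by simp) (by simp) (by positivity)
  choose g hgs hg hgε using hex
  have hgL : ∀ k, MemLp (g k) 2 (stdGaussian F) := fun k =>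
    (hg k).continuous.memLp_of_hasCompactSupport (hgs k)
  have hlim : Filter.Tendsto (fun k => eLpNorm (g k - fun x => √(f x)) 2 (stdGaussian F))
      Filter.atTop (nhds 0) := by
    refine tendsto_of_tendsto_of_tendsto_of_le_of_le tendsto_const_nhds ?_ (fun _ => zero_le)
      (fun k => (eLpNorm_sub_comm _ _ _ _).trans_le (hgε k))
    simpa using ENNReal.tendsto_ofReal tendsto_one_div_add_atTop_nhds_zero_nat
  obtain ⟨ns, hns, hae⟩ := (tendstoInMeasure_of_tendsto_eLpNorm (by simp)
    (fun k => (hgL k).1) hs.1 hlim).exists_seq_tendsto_ae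
  refine ⟨fun k x => g (ns k) x ^ 2 + 1 / ((k : ℝ) + 1),
    fun k => exists_tame_of_contDiff (hg _) (hgs _) _, ?_, ?_⟩
  · filter_upwards [hae] with x hx
    have := (hx.pow 2).add (tendsto_one_div_add_atTop_nhds_zero_nat (𝕜 := ℝ))
    simpa only [hsq, add_zero] using this
  · have h := ((tendsto_integral_sq hs hgL hlim).comp hns.tendsto_atTop).add
      (tendsto_one_div_add_atTop_nhds_zero_nat (𝕜 := ℝ))
    simp only [hsq, add_zero] at h
    refine h.congr fun k => ?_
    rw [integral_add (hgL _).integrable_sq (integrable_const _)]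
    simp

/-- The Brascamp–Lieb inequality for coisometric images of a standard Gaussian vector. -/
theorem lintegral_prod_le_of_map_eq {ι : Type*} [Fintype ι] {G : ι → Type*}
    [∀ i, NormedAddCommGroup (G i)] [∀ i, InnerProductSpace ℝ (G i)]
    [∀ i, FiniteDimensional ℝ (G i)] [∀ i, MeasurableSpace (G i)] [∀ i, BorelSpace (G i)]
    (A : ∀ i, E →L[ℝ] G i) (hA : ∀ i, (stdGaussian E).map (A i) = stdGaussian (G i))
    (p : ι → ℝ) (hp : ∀ i, 0 ≤ p i) (hAp : ∀ z, ∑ i, p i * ‖A i z‖ ^ 2 ≤ ‖z‖ ^ 2)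
    (f : ∀ i, G i → ℝ) (hf : ∀ i, Integrable (f i) (stdGaussian (G i)))
    (hf0 : ∀ i x, 0 ≤ f i x) :
    ∫⁻ z, ENNReal.ofReal (∏ i, f i (A i z) ^ p i) ∂(stdGaussian E) ≤
      ENNReal.ofReal (∏ i, (∫ w, f i w ∂(stdGaussian (G i))) ^ p i) := by
  choose u hu hae hint using fun i => exists_tame_seq (hf i) (hf0 i)
  choose M K hK hT using hu
  have htame : ∀ (k : ℕ) i, Tame (1 / ((k : ℝ) + 1)) (∑ j, |M j k|) (∑ j, K j k) (u i k) := by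
    intro k i
    refine (hT i k).mono ((le_abs_self _).trans ?_) ?_
    · exact Finset.single_le_sum (f := fun j => |M j k|) (fun j _ => abs_nonneg _)
        (Finset.mem_univ i)
    · exact Finset.single_le_sum (f := fun j => K j k) (fun j _ => hK j k) (Finset.mem_univ i)
  have hδ : ∀ k : ℕ, (0 : ℝ) < 1 / ((k : ℝ) + 1) := fun k => by positivity
  have hc : ∀ k, Continuous fun z => ∏ i, u i k (A i z) ^ p i := fun k =>
    continuous_finsetProd _ fun i _ => ((htame k i).cont.comp (A i).continuous).rpow_const
      fun z => Or.inl ((hδ k).trans_le ((htame k i).lower _)).ne'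
  have hle : ∀ k, ∫⁻ z, ENNReal.ofReal (∏ i, u i k (A i z) ^ p i) ∂(stdGaussian E) ≤
      ENNReal.ofReal (∏ i, (∫ w, u i k w ∂(stdGaussian (G i))) ^ p i) := by
    intro k
    have hnn : ∀ z, 0 ≤ ∏ i, u i k (A i z) ^ p i := fun z => Finset.prod_nonneg fun i _ =>
      Real.rpow_nonneg ((hδ k).le.trans ((htame k i).lower _)) _
    have hbd : ∀ z, ∏ i, u i k (A i z) ^ p i ≤ ∏ i, (∑ j, |M j k|) ^ p i := fun z =>
      Finset.prod_le_prod (fun i _ => Real.rpow_nonneg ((hδ k).le.trans ((htame k i).lower _)) _)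
        fun i _ => Real.rpow_le_rpow ((hδ k).le.trans ((htame k i).lower _)) ((htame k i).upper _)
          (hp i)
    rw [← ofReal_integral_eq_lintegral_ofReal _ (Filter.Eventually.of_forall hnn)]
    · exact ENNReal.ofReal_le_ofReal (integral_prod_le_of_tame A hA p hp hAp (hδ k)
        (Finset.sum_nonneg fun j _ => hK j k) (fun i => u i k) (htame k))
    · refine Integrable.of_bound (hc k).aestronglyMeasurable (∏ i, (∑ j, |M j k|) ^ p i)
        (Filter.Eventually.of_forall fun z => ?_)
      rw [Real.norm_of_nonneg (hnn z)]
      exact hbd z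
  have hmeas : ∀ k, AEMeasurable (fun z => ENNReal.ofReal (∏ i, u i k (A i z) ^ p i))
      (stdGaussian E) := fun k => (hc k).measurable.ennreal_ofReal.aemeasurable
  have hpt : ∀ᵐ z ∂(stdGaussian E), ENNReal.ofReal (∏ i, f i (A i z) ^ p i) =
      Filter.liminf (fun k => ENNReal.ofReal (∏ i, u i k (A i z) ^ p i)) Filter.atTop := by
    have : ∀ᵐ z ∂(stdGaussian E), ∀ i,
        Filter.Tendsto (fun k => u i k (A i z)) Filter.atTop (nhds (f i (A i z))) := by
      refine ae_all_iff.2 fun i => ?_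
      have h := hae i
      rw [← hA i] at h
      exact ae_of_ae_map (A i).continuous.aemeasurable h
    filter_upwards [this] with z hz
    refine (Filter.Tendsto.liminf_eq ?_).symm
    exact ENNReal.tendsto_ofReal (tendsto_finsetProd _ fun i _ =>
      (hz i).rpow_const (Or.inr (hp i)))
  calc ∫⁻ z, ENNReal.ofReal (∏ i, f i (A i z) ^ p i) ∂(stdGaussian E)
      = ∫⁻ z, Filter.liminf (fun k => ENNReal.ofReal (∏ i, u i k (A i z) ^ p i))
          Filter.atTop ∂(stdGaussian E) := lintegral_congr_ae hpt
    _ ≤ Filter.liminf (fun k => ∫⁻ z, ENNReal.ofReal (∏ i, u i k (A i z) ^ p i)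
          ∂(stdGaussian E)) Filter.atTop := lintegral_liminf_le' hmeas
    _ ≤ Filter.liminf (fun k => ENNReal.ofReal
          (∏ i, (∫ w, u i k w ∂(stdGaussian (G i))) ^ p i)) Filter.atTop :=
        Filter.liminf_le_liminf (Filter.Eventually.of_forall hle)
    _ = ENNReal.ofReal (∏ i, (∫ w, f i w ∂(stdGaussian (G i))) ^ p i) :=
        (ENNReal.tendsto_ofReal (tendsto_finsetProd _ fun i _ =>
          (hint i).rpow_const (Or.inr (hp i)))).liminf_eq

lemma map_stdGaussian_of_inner_eq (A : E →L[ℝ] F) (J : F → E) (hAJ : ∀ w t, ⟪A w, t⟫ = ⟪w, J t⟫)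
    (hJ : ∀ t, ‖J t‖ = ‖t‖) : (stdGaussian E).map A = stdGaussian F := by
  refine map_stdGaussian_of_coisometry A fun t => ?_
  rw [← hJ t]
  congr 1
  exact ext_inner_left ℝ fun w => by rw [ContinuousLinearMap.adjoint_inner_right, hAJ]

lemma inner_single {ι : Type*} [Fintype ι] [DecidableEq ι] {G : ι → Type*}
    [∀ i, NormedAddCommGroup (G i)] [∀ i, InnerProductSpace ℝ (G i)] (x : PiLp 2 G) (i : ι)
    (v : G i) : ⟪x, PiLp.single 2 i v⟫ = ⟪x i, v⟫ := by
  rw [PiLp.inner_apply, Finset.sum_eq_single i]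
  · simp
  · intro j _ hj
    simp [hj]
  · simp

/-- A pointwise bound by averages over pairs `x ± y l`. -/
lemma rpow_le_prod_of_sq_le {a q : ℝ} (ha : 0 ≤ a) (hq : 0 ≤ q) {n : ℕ} (hn : n ≠ 0)
    {b : Fin n → Bool → ℝ} (hb : ∀ l s, 0 ≤ b l s) (hab : ∀ l, a ^ 2 ≤ b l true * b l false) :
    a ^ q ≤ ∏ l, ∏ s, b l s ^ (q / (2 * n)) := by
  have hn' : (n : ℝ) ≠ 0 := Nat.cast_ne_zero.2 hn
  calc a ^ q = ∏ _l : Fin n, (a ^ 2) ^ (q / (2 * n)) := by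
        rw [Finset.prod_const, Finset.card_univ, Fintype.card_fin, ← Real.rpow_mul_natCast
          (by positivity), ← Real.rpow_natCast a 2, ← Real.rpow_mul ha]
        congr 1
        push_cast
        field_simp
    _ ≤ ∏ l, ∏ s, b l s ^ (q / (2 * n)) := by
        refine Finset.prod_le_prod (fun l _ => by positivity) fun l _ => ?_
        rw [Fintype.prod_bool, ← Real.mul_rpow (hb _ _) (hb _ _)]
        exact Real.rpow_le_rpow (by positivity) (hab l) (by positivity)

/-- The inequality for contractions of a standard Gaussian vector, when each `f i` is midpoint
log-convex in the directions that complete `A i` to a coisometry. -/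
theorem lintegral_prod_le_of_midpoint {ι : Type*} [Fintype ι] {G : ι → Type*}
    [∀ i, NormedAddCommGroup (G i)] [∀ i, InnerProductSpace ℝ (G i)]
    [∀ i, FiniteDimensional ℝ (G i)] [∀ i, MeasurableSpace (G i)] [∀ i, BorelSpace (G i)]
    (A : ∀ i, E →L[ℝ] G i) (B : ∀ i, F →L[ℝ] G i)
    (hAB : ∀ i t, ‖ContinuousLinearMap.adjoint (A i) t‖ ^ 2 +
      ‖ContinuousLinearMap.adjoint (B i) t‖ ^ 2 = ‖t‖ ^ 2)
    (p : ι → ℝ) (hp : ∀ i, 0 ≤ p i) (hAp : ∀ z, ∑ i, p i * ‖A i z‖ ^ 2 ≤ ‖z‖ ^ 2)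
    (f : ∀ i, G i → ℝ) (hf : ∀ i, Integrable (f i) (stdGaussian (G i)))
    (hf0 : ∀ i x, 0 ≤ f i x)
    (hmid : ∀ i x y, f i x ^ 2 ≤ f i (x + B i y) * f i (x - B i y)) :
    ∫⁻ z, ENNReal.ofReal (∏ i, f i (A i z) ^ p i) ∂(stdGaussian E) ≤
      ENNReal.ofReal (∏ i, (∫ w, f i w ∂(stdGaussian (G i))) ^ p i) := by
  obtain ⟨n, hn⟩ := exists_nat_gt (∑ i, p i * ‖B i‖ ^ 2)
  have hn0 : (0 : ℝ) < n :=
    (Finset.sum_nonneg fun i _ => mul_nonneg (hp i) (sq_nonneg _)).trans_lt hn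
  have hnn : n ≠ 0 := by
    rintro rfl
    simp at hn0
  let sgn : Bool → ℝ := fun s => if s then 1 else -1
  have hsgn : ∀ s, |sgn s| = 1 := fun s => by cases s <;> simp [sgn]
  let H := WithLp 2 (E × PiLp 2 fun _ : Fin n => F)
  let A' : ∀ q : ι × Fin n × Bool, H →L[ℝ] G q.1 := fun q =>
    (A q.1).comp (WithLp.fstL 2 ℝ E _) + sgn q.2.2 • (B q.1).comp
      ((PiLp.proj 2 (fun _ : Fin n => F) q.2.1).comp (WithLp.sndL 2 ℝ E _))
  have hA'w : ∀ i l s (w : H), A' (i, l, s) w = A i w.fst + sgn s • B i (w.snd l) :=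
    fun i l s w => rfl
  have hA' : ∀ q, (stdGaussian H).map (A' q) = stdGaussian (G q.1) := by
    rintro ⟨i, l, s⟩
    refine map_stdGaussian_of_inner_eq (A' (i, l, s)) (fun t => WithLp.toLp 2
      (ContinuousLinearMap.adjoint (A i) t,
        PiLp.single 2 l (sgn s • ContinuousLinearMap.adjoint (B i) t))) ?_ ?_
    · intro w t
      rw [hA'w, WithLp.prod_inner_apply, inner_add_left, real_inner_smul_left]
      change _ = ⟪w.fst, ContinuousLinearMap.adjoint (A i) t⟫ +
        ⟪w.snd, PiLp.single 2 l (sgn s • ContinuousLinearMap.adjoint (B i) t)⟫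
      rw [inner_single, real_inner_smul_right, ContinuousLinearMap.adjoint_inner_right,
        ContinuousLinearMap.adjoint_inner_right]
    · intro t
      rw [← sq_eq_sq₀ (norm_nonneg _) (norm_nonneg _), WithLp.prod_norm_sq_eq_of_L2]
      change ‖ContinuousLinearMap.adjoint (A i) t‖ ^ 2 +
        ‖PiLp.single (β := fun _ => F) 2 l (sgn s • ContinuousLinearMap.adjoint (B i) t)‖ ^ 2 = _
      rw [PiLp.norm_single, norm_smul, Real.norm_eq_abs, hsgn, one_mul, hAB]
  have hAp' : ∀ w : H, ∑ q : ι × Fin n × Bool, p q.1 / (2 * n) * ‖A' q w‖ ^ 2 ≤ ‖w‖ ^ 2 := by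
    intro w
    have hpar : ∀ i l, ∑ s, p i / (2 * n) * ‖A' (i, l, s) w‖ ^ 2 =
        p i * ‖A i w.fst‖ ^ 2 / n + p i * ‖B i (w.snd l)‖ ^ 2 / n := by
      intro i l
      have h := parallelogram_law_with_norm ℝ (A i w.fst) (B i (w.snd l))
      have h1 : A' (i, l, true) w = A i w.fst + B i (w.snd l) := by simp [hA'w, sgn]
      have h2 : A' (i, l, false) w = A i w.fst - B i (w.snd l) := by
        simp [hA'w, sgn, sub_eq_add_neg]
      rw [Fintype.sum_bool, h1, h2, ← mul_add, h]
      field_simp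
    have hB : ∀ l, ∑ i, p i * ‖B i (w.snd l)‖ ^ 2 / n ≤ ‖w.snd l‖ ^ 2 := by
      intro l
      rw [← Finset.sum_div, div_le_iff₀ hn0]
      calc ∑ i, p i * ‖B i (w.snd l)‖ ^ 2
          ≤ ∑ i, p i * ‖B i‖ ^ 2 * ‖w.snd l‖ ^ 2 := by
            refine Finset.sum_le_sum fun i _ => ?_
            rw [mul_assoc, ← mul_pow]
            exact mul_le_mul_of_nonneg_left
              (pow_le_pow_left₀ (norm_nonneg _) ((B i).le_opNorm _) 2) (hp i)
        _ = (∑ i, p i * ‖B i‖ ^ 2) * ‖w.snd l‖ ^ 2 := by rw [Finset.sum_mul]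
        _ ≤ n * ‖w.snd l‖ ^ 2 := mul_le_mul_of_nonneg_right hn.le (sq_nonneg _)
        _ = ‖w.snd l‖ ^ 2 * n := mul_comm _ _
    calc ∑ q : ι × Fin n × Bool, p q.1 / (2 * n) * ‖A' q w‖ ^ 2
        = ∑ l : Fin n, ∑ i, (p i * ‖A i w.fst‖ ^ 2 / n + p i * ‖B i (w.snd l)‖ ^ 2 / n) := by
          rw [Fintype.sum_prod_type]
          simp_rw [Fintype.sum_prod_type, hpar]
          rw [Finset.sum_comm]
      _ ≤ ∑ l : Fin n, (‖w.fst‖ ^ 2 / n + ‖w.snd l‖ ^ 2) := by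
          refine Finset.sum_le_sum fun l _ => ?_
          rw [Finset.sum_add_distrib, ← Finset.sum_div]
          exact add_le_add (div_le_div_of_nonneg_right (hAp _) hn0.le) (hB l)
      _ = ‖w‖ ^ 2 := by
          rw [Finset.sum_add_distrib, WithLp.prod_norm_sq_eq_of_L2, PiLp.norm_sq_eq_of_L2]
          congr 1
          rw [Finset.sum_const, Finset.card_univ, Fintype.card_fin, nsmul_eq_mul]
          field_simp
  have hfst : (stdGaussian H).map (WithLp.fstL 2 ℝ E (PiLp 2 fun _ : Fin n => F)) =
      stdGaussian E := by
    refine map_stdGaussian_of_inner_eq _ (fun t => WithLp.toLp 2 (t, 0)) ?_ ?_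
    · intro w t
      rw [WithLp.prod_inner_apply]
      simp
    · intro t
      rw [← sq_eq_sq₀ (norm_nonneg _) (norm_nonneg _), WithLp.prod_norm_sq_eq_of_L2]
      simp
  have hpt : ∀ w : H, ∏ i, f i (A i w.fst) ^ p i ≤
      ∏ q : ι × Fin n × Bool, f q.1 (A' q w) ^ (p q.1 / (2 * n)) := by
    intro w
    rw [Fintype.prod_prod_type]
    refine Finset.prod_le_prod (fun i _ => Real.rpow_nonneg (hf0 i _) _) fun i _ => ?_
    rw [Fintype.prod_prod_type]
    refine rpow_le_prod_of_sq_le (hf0 i _) (hp i) hnn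
      (b := fun l s => f i (A' (i, l, s) w)) (fun l s => hf0 i _) fun l => ?_
    have := hmid i (A i w.fst) (w.snd l)
    simpa [hA'w, sgn, sub_eq_add_neg] using this
  have hR : ∏ q : ι × Fin n × Bool,
      (∫ x, f q.1 x ∂(stdGaussian (G q.1))) ^ (p q.1 / (2 * n)) =
        ∏ i, (∫ x, f i x ∂(stdGaussian (G i))) ^ p i := by
    rw [Fintype.prod_prod_type]
    refine Finset.prod_congr rfl fun i _ => ?_
    have hI : 0 ≤ ∫ x, f i x ∂(stdGaussian (G i)) := integral_nonneg (hf0 i)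
    change ∏ _q : Fin n × Bool, (∫ x, f i x ∂(stdGaussian (G i))) ^ (p i / (2 * n)) = _
    rw [Finset.prod_const, Finset.card_univ, Fintype.card_prod, Fintype.card_fin,
      Fintype.card_bool, ← Real.rpow_mul_natCast hI]
    congr 1
    push_cast
    field_simp
  calc ∫⁻ z, ENNReal.ofReal (∏ i, f i (A i z) ^ p i) ∂(stdGaussian E)
      ≤ ∫⁻ w : H, ENNReal.ofReal (∏ i, f i (A i w.fst) ^ p i) ∂(stdGaussian H) := by
        rw [← hfst]
        exact lintegral_map_le _ _
    _ ≤ ∫⁻ w : H, ENNReal.ofReal (∏ q : ι × Fin n × Bool, f q.1 (A' q w) ^ (p q.1 / (2 * n)))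
          ∂(stdGaussian H) := lintegral_mono fun w => ENNReal.ofReal_le_ofReal (hpt w)
    _ ≤ _ := lintegral_prod_le_of_map_eq A' hA' (fun q => p q.1 / (2 * n))
          (fun q => div_nonneg (hp _) (by positivity)) hAp' (fun q => f q.1) (fun q => hf q.1)
          fun q => hf0 q.1
    _ = _ := by rw [hR]

/-- A real matrix as a continuous linear map between Euclidean spaces. -/
def euclideanMap {a b : Type*} [Fintype a] [Fintype b] [DecidableEq b] (M : Matrix a b ℝ) :
    EuclideanSpace ℝ b →L[ℝ] EuclideanSpace ℝ a :=
  M.toEuclideanLin.toContinuousLinearMap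

lemma ofLp_euclideanMap {a b : Type*} [Fintype a] [Fintype b] [DecidableEq b] (M : Matrix a b ℝ)
    (v : EuclideanSpace ℝ b) : (euclideanMap M v).ofLp = M *ᵥ v.ofLp := rfl

lemma norm_sq_eq_dotProduct {a : Type*} [Fintype a] (v : EuclideanSpace ℝ a) :
    ‖v‖ ^ 2 = v.ofLp ⬝ᵥ v.ofLp := by
  rw [EuclideanSpace.real_norm_sq_eq]
  simp [dotProduct, sq]

lemma norm_adjoint_euclideanMap_sq {a b : Type*} [Fintype a] [Fintype b] [DecidableEq a]
    [DecidableEq b] (M : Matrix a b ℝ) (t : EuclideanSpace ℝ a) :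
    ‖ContinuousLinearMap.adjoint (euclideanMap M) t‖ ^ 2 =
      t.ofLp ⬝ᵥ (M * Mᵀ) *ᵥ t.ofLp := by
  have h : ContinuousLinearMap.adjoint (euclideanMap M) t = euclideanMap Mᵀ t := by
    refine ext_inner_left ℝ fun w => ?_
    rw [ContinuousLinearMap.adjoint_inner_right, EuclideanSpace.inner_eq_star_dotProduct,
      EuclideanSpace.inner_eq_star_dotProduct, ofLp_euclideanMap, ofLp_euclideanMap,
      star_trivial, star_trivial, dotProduct_mulVec, mulVec_transpose]
  rw [h, norm_sq_eq_dotProduct, ofLp_euclideanMap, ← mulVec_mulVec, dotProduct_mulVec _ M,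
    mulVec_transpose]

/-- If `U Uᵀ ≤ diag(d)⁻¹` then `Uᵀ diag(d) U ≤ 1`. -/
lemma sum_mul_mulVec_sq_le {a b : Type*} [Fintype a] [Fintype b] [DecidableEq a] {d : a → ℝ}
    (hd : ∀ q, 0 < d q) {U : Matrix a b ℝ} (h : ((Matrix.diagonal d)⁻¹ - U * Uᵀ).PosSemidef)
    (z : b → ℝ) : ∑ q, d q * (U *ᵥ z) q ^ 2 ≤ z ⬝ᵥ z := by
  have hinv : (Matrix.diagonal d)⁻¹ = Matrix.diagonal fun q => (d q)⁻¹ := by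
    refine Matrix.inv_eq_right_inv ?_
    rw [Matrix.diagonal_mul_diagonal, ← Matrix.diagonal_one]
    congr 1
    ext q
    exact mul_inv_cancel₀ (hd q).ne'
  set v : a → ℝ := fun q => d q * (U *ᵥ z) q with hv
  have h1 := h.dotProduct_mulVec_nonneg v
  rw [star_trivial, sub_mulVec, dotProduct_sub, ← mulVec_mulVec, dotProduct_mulVec _ U,
    mulVec_transpose, hinv] at h1
  have h2 : v ⬝ᵥ (Matrix.diagonal fun q => (d q)⁻¹) *ᵥ v = ∑ q, d q * (U *ᵥ z) q ^ 2 := by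
    refine Finset.sum_congr rfl fun q _ => ?_
    rw [mulVec_diagonal, hv]
    have := (hd q).ne'
    field_simp
  have h3 : (v ᵥ* U) ⬝ᵥ z = ∑ q, d q * (U *ᵥ z) q ^ 2 := by
    rw [← dotProduct_mulVec]
    refine Finset.sum_congr rfl fun q _ => ?_
    rw [hv]
    ring
  have h4 : 0 ≤ (v ᵥ* U - z) ⬝ᵥ (v ᵥ* U - z) :=
    Finset.sum_nonneg fun q _ => mul_self_nonneg _
  rw [sub_dotProduct, dotProduct_sub, dotProduct_sub, dotProduct_comm z (v ᵥ* U)] at h4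
  linarith

lemma gaussFn_add_mulVec {k : ℕ} {b : Type*} [Fintype b] {W : Matrix (Fin k) (Fin k) ℝ}
    (hW : W.IsHermitian) {B : Matrix (Fin k) b ℝ} (hWB : W * B = 0) (x : Fin k → ℝ) (y : b → ℝ) :
    gaussFn W (x + B *ᵥ y) = gaussFn W x := by
  have h1 : W *ᵥ (B *ᵥ y) = 0 := by rw [mulVec_mulVec, hWB, zero_mulVec]
  have h2 : W *ᵥ x ⬝ᵥ B *ᵥ y = 0 := by
    have hWt : Wᵀ = W := hW
    rw [← hWt, mulVec_transpose, ← dotProduct_mulVec, h1, dotProduct_zero]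
  simp only [gaussFn]
  rw [mulVec_add, h1, add_zero, dotProduct_add, h2, add_zero]

/-- Midpoint log-convexity in the directions annihilated by `W`. -/
lemma sq_le_mul_of_moreLogConvex {k : ℕ} {b : Type*} [Fintype b] {W : Matrix (Fin k) (Fin k) ℝ}
    (hW : W.IsHermitian) {B : Matrix (Fin k) b ℝ} (hWB : W * B = 0) {f : (Fin k → ℝ) → ℝ}
    (hf : MoreLogConvex f W) (x : Fin k → ℝ) (y : b → ℝ) :
    f x ^ 2 ≤ f (x + B *ᵥ y) * f (x - B *ᵥ y) := by
  obtain ⟨h, ⟨h0, hh⟩, rfl⟩ := hf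
  have h1 : gaussFn W (x - B *ᵥ y) = gaussFn W x := by
    rw [sub_eq_add_neg, ← mulVec_neg, gaussFn_add_mulVec hW hWB]
  have h2 : h x ^ 2 ≤ h (x + B *ᵥ y) * h (x - B *ᵥ y) := by
    have := hh (x + B *ᵥ y) (x - B *ᵥ y) (1 / 2) (1 / 2) (by norm_num) (by norm_num) (by norm_num)
    rw [← smul_add, add_add_sub_cancel, ← two_smul ℝ x, smul_smul,
      ← Real.mul_rpow (h0 _) (h0 _), ← Real.sqrt_eq_rpow] at this
    norm_num at this
    have h3 := pow_le_pow_left₀ (h0 x) this 2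
    rwa [Real.sq_sqrt (mul_nonneg (h0 _) (h0 _))] at h3
  simp only
  rw [gaussFn_add_mulVec hW hWB, h1, mul_pow]
  calc gaussFn W x ^ 2 * h x ^ 2 ≤ gaussFn W x ^ 2 * (h (x + B *ᵥ y) * h (x - B *ᵥ y)) :=
        mul_le_mul_of_nonneg_left h2 (sq_nonneg _)
    _ = _ := by ring


lemma exists_transpose_mul_self_eq {k : ℕ} {S : Matrix (Fin k) (Fin k) ℝ} (hS : S.PosSemidef) :
    ∃ C : Matrix (Fin k) (Fin k) ℝ, Cᵀ * C = S := by
  open scoped MatrixOrder Matrix.Norms.L2Operator in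
  obtain ⟨C, hC⟩ := CStarAlgebra.nonneg_iff_eq_star_mul_self.mp hS.nonneg
  exact ⟨C, hC.symm⟩

end GaussianBrascampLieb

/-- Brascamp–Lieb inequality for jointly Gaussian random vectors with covariance
dominated by `P⁻¹`. -/
theorem gaussian_vector_brascamp_lieb
    {m : ℕ} (hm : 1 ≤ m) {ni : Fin m → ℕ} (hni_pos : ∀ i, 0 < ni i)
    (T : Matrix (Σ i : Fin m, Fin (ni i)) (Σ i : Fin m, Fin (ni i)) ℝ)
    (hT : T.PosSemidef) {r : ℕ} (hrank : T.rank = r)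
    (Q : ∀ i, Matrix (Fin (ni i)) (Fin (ni i)) ℝ)
    (hQ1 : ∀ i, (Q i - 1).PosSemidef)
    (hTii : ∀ i, ((1 : Matrix (Fin (ni i)) (Fin (ni i)) ℝ) -
      Matrix.of (fun a b : Fin (ni i) => T ⟨i, a⟩ ⟨i, b⟩)).PosSemidef)
    (hcomp : ∀ i, ((1 : Matrix (Fin (ni i)) (Fin (ni i)) ℝ) -
      Matrix.of (fun a b : Fin (ni i) => T ⟨i, a⟩ ⟨i, b⟩)) * (Q i - 1) = 0)
    (p : Fin m → ℝ) (hp : ∀ i, 0 < p i)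
    (hTP : (((Matrix.diagonal fun q : Σ i : Fin m, Fin (ni i) => p q.1)⁻¹ :
        Matrix (Σ i : Fin m, Fin (ni i)) (Σ i : Fin m, Fin (ni i)) ℝ) - T).PosSemidef)
    (U : Matrix (Σ i : Fin m, Fin (ni i)) (Fin r) ℝ) (hU : U * Uᵀ = T)
    (f : ∀ i, (Fin (ni i) → ℝ) → ℝ)
    (hf0 : ∀ i x, 0 ≤ f i x)
    (hfint : ∀ i, Integrable (f i) (stdGaussian (ni i)))
    (hflc : ∀ i, MoreLogConvex (f i) ((2 * Real.pi)⁻¹ • (Q i - 1))) :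
    (∫⁻ x, ENNReal.ofReal (∏ i, f i (fun a => x ⟨i, a⟩) ^ p i)
        ∂ (Measure.map U.mulVec (stdGaussian r))) ≤
      ∏ i, ENNReal.ofReal (∫ y, f i y ∂ stdGaussian (ni i)) ^ p i := by
  have hto : ∀ k, (ProbabilityTheory.stdGaussian (EuclideanSpace ℝ (Fin k))).map WithLp.ofLp =
      stdGaussian k := by
    intro k
    rw [← stdGaussian_map_toLp, Measure.map_map (by fun_prop) (by fun_prop)]
    exact Measure.map_id
  choose C hC using fun i => GaussianBrascampLieb.exists_transpose_mul_self_eq (hTii i)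
  let V : ∀ i, Matrix (Fin (ni i)) (Fin r) ℝ := fun i => U.submatrix (Sigma.mk (β := fun j => Fin (ni j)) i) id
  let B : ∀ i, Matrix (Fin (ni i)) (Σ i : Fin m, Fin (ni i)) ℝ := fun i =>
    (Matrix.blockDiagonal' fun j => (C j)ᵀ).submatrix (Sigma.mk (β := fun j => Fin (ni j)) i) id
  have hV : ∀ i, V i * (V i)ᵀ = Matrix.of fun a b => T ⟨i, a⟩ ⟨i, b⟩ := by
    intro i
    rw [← hU]
    rfl
  have hB : ∀ i, B i * (B i)ᵀ = 1 - Matrix.of fun a b => T ⟨i, a⟩ ⟨i, b⟩ := by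
    intro i
    have h : B i * (B i)ᵀ = ((Matrix.blockDiagonal' fun j => (C j)ᵀ) *
        (Matrix.blockDiagonal' fun j => (C j)ᵀ)ᵀ).submatrix (Sigma.mk (β := fun j => Fin (ni j)) i) (Sigma.mk (β := fun j => Fin (ni j)) i) := rfl
    rw [h, Matrix.blockDiagonal'_transpose, ← Matrix.blockDiagonal'_mul, ← hC i]
    ext a b
    rw [Matrix.submatrix_apply, Matrix.blockDiagonal'_apply_eq, Matrix.transpose_transpose]
  have hW : ∀ i, ((2 * Real.pi)⁻¹ • (Q i - 1)).IsHermitian := fun i => by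
    have h := (hQ1 i).1
    rw [Matrix.IsHermitian, Matrix.conjTranspose_smul, h, star_trivial]
  have hWB : ∀ i, ((2 * Real.pi)⁻¹ • (Q i - 1)) * B i = 0 := by
    intro i
    have h1 : (B i)ᵀ * (Q i - 1) = 0 := by
      have h2 := hcomp i
      rw [← hB i] at h2
      exact (Matrix.self_mul_conjTranspose_mul_eq_zero (B i) (Q i - 1)).1 h2
    have h2 : (Q i - 1)ᵀ = Q i - 1 := (hQ1 i).1
    have h3 := congrArg Matrix.transpose h1
    rw [Matrix.transpose_mul, Matrix.transpose_transpose, h2, Matrix.transpose_zero] at h3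
    rw [Matrix.smul_mul, h3, smul_zero]
  have hmain := GaussianBrascampLieb.lintegral_prod_le_of_midpoint
    (fun i => GaussianBrascampLieb.euclideanMap (V i))
    (fun i => GaussianBrascampLieb.euclideanMap (B i)) (fun i t => ?_) p (fun i => (hp i).le)
    (fun z => ?_) (fun i x => f i x.ofLp) (fun i => ?_) (fun i x => hf0 i _) (fun i x y => ?_)
  · have hint : ∀ i, ∫ w, f i w.ofLp ∂(ProbabilityTheory.stdGaussian
        (EuclideanSpace ℝ (Fin (ni i)))) = ∫ y, f i y ∂(stdGaussian (ni i)) := by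
      intro i
      rw [← hto]
      exact (MeasureTheory.integral_map_equiv
        (MeasurableEquiv.toLp 2 (Fin (ni i) → ℝ)).symm (f i)).symm
    calc ∫⁻ x, ENNReal.ofReal (∏ i, f i (fun a => x ⟨i, a⟩) ^ p i)
          ∂(Measure.map U.mulVec (stdGaussian r))
        ≤ ∫⁻ z, ENNReal.ofReal (∏ i, f i (fun a => (U *ᵥ z) ⟨i, a⟩) ^ p i) ∂(stdGaussian r) :=
          lintegral_map_le _ _
      _ ≤ ∫⁻ z, ENNReal.ofReal (∏ i, f i (fun a => (U *ᵥ z.ofLp) ⟨i, a⟩) ^ p i)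
          ∂(ProbabilityTheory.stdGaussian (EuclideanSpace ℝ (Fin r))) := by
          rw [← hto r]
          exact lintegral_map_le _ _
      _ ≤ _ := hmain
      _ = _ := by
          simp only [hint]
          rw [ENNReal.ofReal_prod_of_nonneg fun i _ =>
            Real.rpow_nonneg (integral_nonneg (hf0 i)) _]
          exact Finset.prod_congr rfl fun i _ =>
            (ENNReal.ofReal_rpow_of_nonneg (integral_nonneg (hf0 i)) (hp i).le).symm
  · rw [GaussianBrascampLieb.norm_adjoint_euclideanMap_sq,
      GaussianBrascampLieb.norm_adjoint_euclideanMap_sq, hV, hB, ← dotProduct_add, ← add_mulVec,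
      add_sub_cancel, one_mulVec, GaussianBrascampLieb.norm_sq_eq_dotProduct]
  · rw [← hU] at hTP
    rw [GaussianBrascampLieb.norm_sq_eq_dotProduct]
    have h := GaussianBrascampLieb.sum_mul_mulVec_sq_le
      (d := fun q : Σ i : Fin m, Fin (ni i) => p q.1) (fun q => hp q.1) hTP z.ofLp
    refine (le_of_eq ?_).trans h
    rw [Fintype.sum_sigma]
    refine Finset.sum_congr rfl fun i _ => ?_
    rw [EuclideanSpace.real_norm_sq_eq, Finset.mul_sum]
    rfl
  · have h := hfint i
    rw [← hto] at h
    exact h.comp_measurable (by fun_prop)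
  · exact GaussianBrascampLieb.sq_le_mul_of_moreLogConvex (hW i) (hWB i) (hflc i) x.ofLp y.ofLp
end
end

section
/- Let dμ = e^{−V} dx and dν = e^{−W} dx be probability measures on ℝⁿ with V : ℝⁿ → ℝ finite everywhere (so μ is supported on all of ℝⁿ), and suppose there exist symmetric positive definite n × n matrices A and B such that x ↦ ½⟨Ax,x⟩ − V(x) is convex (i.e. ∇²V ≤ A) and x ↦ W(x) − ½⟨Bx,x⟩ is convex (i.e. ∇²W ≥ B). Let Φ : ℝⁿ → ℝ be a differentiable convex function whose gradient ∇Φ pushes μ forward to ν (the Brenier map). Then x ↦ ½⟨A^{1/2}(A^{1/2} B A^{1/2})^{-1/2} A^{1/2} x, x⟩ − Φ(x) is convex, i.e. ∇²Φ ≤ A^{1/2}(A^{1/2} B A^{1/2})^{-1/2} A^{1/2}. -/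
open MeasureTheory Matrix
open scoped ENNReal

noncomputable section

/-- The gradient of a function on `ℝⁿ`, as a vector of partial derivatives. -/
def gradVec {n : ℕ} (Φ : (Fin n → ℝ) → ℝ) (x : Fin n → ℝ) : Fin n → ℝ :=
  fun i => fderiv ℝ Φ x (Pi.single i 1)

/-- The determinant of `1 + K` in terms of the eigenvalues of a symmetric matrix `K`. -/
lemma det_one_add_eq_prod {n : ℕ} {K : Matrix (Fin n) (Fin n) ℝ} (hK : K.IsHermitian) :
    (1 + K).det = ∏ i, (1 + hK.eigenvalues i) := by
  have h := K.eval_charpoly (-1)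
  rw [hK.charpoly_eq, Polynomial.eval_prod] at h
  have h1 : scalar (Fin n) (-1 : ℝ) - K = -(1 + K) := by
    rw [map_neg, map_one]; abel
  rw [h1, det_neg] at h
  simp only [Polynomial.eval_sub, Polynomial.eval_X, Polynomial.eval_C] at h
  have h2 : ∏ i, (-1 - ((hK.eigenvalues i : ℝ) : ℝ))
      = (-1) ^ (Fintype.card (Fin n)) * ∏ i, (1 + hK.eigenvalues i) := by
    rw [← Finset.card_univ, ← Finset.prod_const, ← Finset.prod_mul_distrib]
    exact Finset.prod_congr rfl fun i _ => by ring
  refine mul_left_cancel₀ (pow_ne_zero (Fintype.card (Fin n)) (by norm_num : (-1 : ℝ) ≠ 0)) ?_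
  rw [← h, ← h2]
  rfl

/-- Simultaneous reduction of a positive definite and a positive semidefinite matrix, at the
level of determinants. -/
lemma exists_det_add_eq {n : ℕ} {P Q : Matrix (Fin n) (Fin n) ℝ} (hP : P.PosDef)
    (hQ : Q.PosSemidef) : ∃ K : Matrix (Fin n) (Fin n) ℝ, K.PosSemidef ∧
      (P + Q).det = P.det * (1 + K).det ∧ Q.det = P.det * K.det := by
  obtain ⟨C, hC⟩ : ∃ C : Matrix (Fin n) (Fin n) ℝ, P = Cᴴ * C := by
    open scoped MatrixOrder in
    exact CStarAlgebra.nonneg_iff_eq_star_mul_self.mp hP.posSemidef.nonneg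
  have hdet : P.det = Cᴴ.det * C.det := by rw [hC, det_mul]
  have hCu : IsUnit C.det := by
    rw [isUnit_iff_ne_zero]
    intro h0
    have := hP.det_pos
    rw [hdet, h0] at this
    simp at this
  have hCu' : IsUnit Cᴴ.det := by simpa [det_conjTranspose] using hCu
  refine ⟨(C⁻¹)ᴴ * Q * C⁻¹, hQ.conjTranspose_mul_mul_same _, ?_, ?_⟩
  · have : P + Q = Cᴴ * (1 + (C⁻¹)ᴴ * Q * C⁻¹) * C := by
      rw [Matrix.mul_add, Matrix.add_mul, Matrix.mul_one, ← hC, conjTranspose_nonsing_inv]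
      congr 1
      rw [← Matrix.mul_assoc, ← Matrix.mul_assoc, mul_nonsing_inv _ hCu', Matrix.one_mul,
        Matrix.mul_assoc, nonsing_inv_mul _ hCu, Matrix.mul_one]
    rw [this, hdet, det_mul, det_mul]; ring
  · have : Q = Cᴴ * ((C⁻¹)ᴴ * Q * C⁻¹) * C := by
      rw [conjTranspose_nonsing_inv, ← Matrix.mul_assoc, ← Matrix.mul_assoc,
        mul_nonsing_inv _ hCu', Matrix.one_mul,
        Matrix.mul_assoc, nonsing_inv_mul _ hCu, Matrix.mul_one]
    conv_lhs => rw [this]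
    rw [hdet, det_mul, det_mul]; ring

lemma det_le_det_add {n : ℕ} {P Q : Matrix (Fin n) (Fin n) ℝ} (hP : P.PosDef)
    (hQ : Q.PosSemidef) : P.det ≤ (P + Q).det := by
  obtain ⟨K, hK, h1, -⟩ := exists_det_add_eq hP hQ
  rw [h1, det_one_add_eq_prod hK.1]
  refine le_mul_of_one_le_right hP.det_pos.le ?_
  have := Finset.prod_le_prod (s := Finset.univ) (f := fun _ : Fin n => (1 : ℝ))
    (g := fun i => 1 + hK.1.eigenvalues i) (fun _ _ => zero_le_one)
    fun i _ => by linarith [hK.eigenvalues_nonneg i]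
  simpa using this

/-- Log-concavity of the determinant at midpoints, in multiplicative form. -/
lemma four_pow_mul_det_mul_det_le {n : ℕ} {P Q : Matrix (Fin n) (Fin n) ℝ} (hP : P.PosDef)
    (hQ : Q.PosSemidef) : 4 ^ n * (P.det * Q.det) ≤ (P + Q).det ^ 2 := by
  obtain ⟨K, hK, h1, h2⟩ := exists_det_add_eq hP hQ
  rw [h1, h2, det_one_add_eq_prod hK.1, hK.1.det_eq_prod_eigenvalues]
  have h3 : (4 : ℝ) ^ n * ∏ i, hK.1.eigenvalues i ≤ (∏ i, (1 + hK.1.eigenvalues i)) ^ 2 := by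
    have : (4 : ℝ) ^ n = ∏ _i : Fin n, (4 : ℝ) := by simp
    rw [this, ← Finset.prod_mul_distrib, ← Finset.prod_pow]
    refine Finset.prod_le_prod (fun i _ => ?_) fun i _ => ?_
    · exact mul_nonneg (by norm_num) (hK.eigenvalues_nonneg i)
    · nlinarith [sq_nonneg (1 - hK.1.eigenvalues i)]
  have h4 := mul_le_mul_of_nonneg_left h3 (sq_nonneg P.det)
  simp only [RCLike.ofReal_real_eq_id, id_eq]
  nlinarith [h4]

/-- Log-concavity of the determinant, with room for a nonnegative multiple of the identity. -/
lemma det_mul_det_le_sq {n : ℕ} {P Q : Matrix (Fin n) (Fin n) ℝ} (hP : P.PosDef)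
    (hQ : Q.PosDef) {ε : ℝ} (hε : 0 ≤ ε) :
    P.det * Q.det ≤ ((2 : ℝ)⁻¹ • (P + Q) + ε • (1 : Matrix (Fin n) (Fin n) ℝ)).det ^ 2 := by
  have hM : ((2 : ℝ)⁻¹ • (P + Q)).PosDef := (hP.add hQ).smul (by norm_num)
  have h1 := det_le_det_add hM (PosSemidef.one.smul hε)
  refine le_trans ?_ (pow_le_pow_left₀ hM.det_pos.le h1 2)
  have h2 := four_pow_mul_det_mul_det_le hP hQ.posSemidef
  rw [det_smul, mul_pow, Fintype.card_fin, ← pow_mul, mul_comm n 2, pow_mul]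
  have h4 : (0 : ℝ) < 4 ^ n := by positivity
  rw [show ((2 : ℝ)⁻¹ ^ 2) = 4⁻¹ by norm_num, inv_pow, ← div_eq_inv_mul, le_div_iff₀ h4]
  linarith

lemma fderiv_apply_eq_gradVec_dotProduct {n : ℕ} (Φ : (Fin n → ℝ) → ℝ) (x v : Fin n → ℝ) :
    fderiv ℝ Φ x v = gradVec Φ x ⬝ᵥ v := by
  conv_lhs => rw [← Finset.univ_sum_single v, map_sum]
  refine Finset.sum_congr rfl fun i _ => ?_
  have : (Pi.single i (v i) : Fin n → ℝ) = v i • Pi.single i 1 := by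
    rw [← Pi.single_smul, smul_eq_mul, mul_one]
  rw [this, map_smul, smul_eq_mul, mul_comm]
  rfl

lemma hasDerivAt_comp_add_smul {n : ℕ} {Φ : (Fin n → ℝ) → ℝ} (hd : Differentiable ℝ Φ)
    (x v : Fin n → ℝ) (s : ℝ) :
    HasDerivAt (fun t : ℝ => Φ (x + t • v)) (gradVec Φ (x + s • v) ⬝ᵥ v) s := by
  rw [← fderiv_apply_eq_gradVec_dotProduct]
  have h2 : HasDerivAt (fun t : ℝ => x + t • v) v s := by
    simpa using ((hasDerivAt_id s).smul_const v).const_add x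
  exact (hd _).hasFDerivAt.comp_hasDerivAt s h2

/-- The gradient of a differentiable convex function is a subgradient. -/
lemma add_gradVec_dotProduct_le {n : ℕ} {Φ : (Fin n → ℝ) → ℝ} (hc : ConvexOn ℝ Set.univ Φ)
    (hd : Differentiable ℝ Φ) (x w : Fin n → ℝ) :
    Φ x + gradVec Φ x ⬝ᵥ (w - x) ≤ Φ w := by
  have h1 : HasDerivAt (fun t : ℝ => Φ (x + t • (w - x))) (gradVec Φ x ⬝ᵥ (w - x)) 0 := by
    simpa using hasDerivAt_comp_add_smul hd x (w - x) 0
  have h2 : ConvexOn ℝ Set.univ (fun t : ℝ => Φ (x + t • (w - x))) := by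
    have := hc.comp_affineMap (AffineMap.lineMap x w : ℝ →ᵃ[ℝ] (Fin n → ℝ))
    have heq : (Φ ∘ (AffineMap.lineMap x w : ℝ →ᵃ[ℝ] (Fin n → ℝ)))
        = fun t : ℝ => Φ (x + t • (w - x)) := by
      ext t
      simp [AffineMap.lineMap_apply, add_comm]
    rwa [heq, Set.preimage_univ] at this
  have h3 := h2.le_slope_of_hasDerivAt (Set.mem_univ 0) (Set.mem_univ 1) zero_lt_one h1
  rw [slope_def_field] at h3
  simp only [one_smul, zero_smul, add_zero, add_sub_cancel, sub_zero, div_one] at h3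
  linarith

lemma gradVec_monotone {n : ℕ} {Φ : (Fin n → ℝ) → ℝ} (hc : ConvexOn ℝ Set.univ Φ)
    (hd : Differentiable ℝ Φ) (x w : Fin n → ℝ) :
    0 ≤ (gradVec Φ w - gradVec Φ x) ⬝ᵥ (w - x) := by
  have h1 := add_gradVec_dotProduct_le hc hd x w
  have h2 := add_gradVec_dotProduct_le hc hd w x
  rw [← neg_sub w x, dotProduct_neg] at h2
  rw [sub_dotProduct]
  linarith

/-- A differentiable convex function is continuously differentiable. -/
lemma continuous_gradVec {n : ℕ} {Φ : (Fin n → ℝ) → ℝ} (hc : ConvexOn ℝ Set.univ Φ)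
    (hd : Differentiable ℝ Φ) : Continuous (gradVec Φ) := by
  have key : ∀ (x v : Fin n → ℝ) (a : ℝ), gradVec Φ x ⬝ᵥ v < a →
      ∀ᶠ z in nhds x, gradVec Φ z ⬝ᵥ v < a := by
    intro x v a ha
    have h1 : HasDerivAt (fun t : ℝ => Φ (x + t • v)) (gradVec Φ x ⬝ᵥ v) 0 := by
      simpa using hasDerivAt_comp_add_smul hd x v 0
    have h2 := (hasDerivAt_iff_tendsto_slope_zero.mp h1).eventually (gt_mem_nhds ha)
    have h3 := h2.filter_mono (nhdsGT_le_nhdsNE 0)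
    obtain ⟨s, hs1, hs2⟩ := (h3.and self_mem_nhdsWithin).exists
    have hs : 0 < s := hs2
    simp only [zero_add, zero_smul, add_zero, smul_eq_mul] at hs1
    have hcont : Continuous fun z => s⁻¹ * (Φ (z + s • v) - Φ z) := by
      have := hd.continuous
      fun_prop
    filter_upwards [hcont.continuousAt.eventually (gt_mem_nhds hs1)] with z hz
    refine lt_of_le_of_lt ?_ hz
    have h4 := add_gradVec_dotProduct_le hc hd z (z + s • v)
    rw [add_sub_cancel_left, dotProduct_smul, smul_eq_mul] at h4
    rw [← div_eq_inv_mul, le_div_iff₀ hs]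
    linarith
  refine continuous_pi fun i => continuous_iff_continuousAt.mpr fun x => ?_
  refine tendsto_order.mpr ⟨fun a ha => ?_, fun a ha => ?_⟩
  · filter_upwards [key x (-Pi.single i 1) (-a) (by simpa using ha)] with z hz
    simpa using hz
  · filter_upwards [key x (Pi.single i 1) a (by simpa using ha)] with z hz
    simpa using hz

lemma sq_norm_le_dotProduct_self {n : ℕ} (d : Fin n → ℝ) : ‖d‖ ^ 2 ≤ d ⬝ᵥ d := by
  have h0 : 0 ≤ d ⬝ᵥ d := Finset.sum_nonneg fun i _ => mul_self_nonneg _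
  rw [← Real.sq_sqrt h0]
  refine pow_le_pow_left₀ (norm_nonneg _) ?_ 2
  refine (pi_norm_le_iff_of_nonneg (Real.sqrt_nonneg _)).mpr fun i => Real.le_sqrt_of_sq_le ?_
  rw [Real.norm_eq_abs, sq_abs, sq]
  exact Finset.single_le_sum (f := fun i => d i * d i) (fun i _ => mul_self_nonneg _)
    (Finset.mem_univ i)

lemma dotProduct_le_card_mul_norm {n : ℕ} (e d : Fin n → ℝ) : e ⬝ᵥ d ≤ n * (‖e‖ * ‖d‖) := by
  calc e ⬝ᵥ d ≤ ∑ _i : Fin n, ‖e‖ * ‖d‖ := by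
        refine Finset.sum_le_sum fun i _ => (le_abs_self _).trans ?_
        rw [abs_mul]
        exact mul_le_mul (norm_le_pi_norm e i) (norm_le_pi_norm d i) (abs_nonneg _)
          (norm_nonneg _)
    _ = n * (‖e‖ * ‖d‖) := by simp

/-- A continuous monotone map on `ℝⁿ` is differentiable almost everywhere. -/
lemma ae_differentiableAt_of_monotone {n : ℕ} {T : (Fin n → ℝ) → Fin n → ℝ}
    (hT : Continuous T) (hmono : ∀ x w, 0 ≤ (T w - T x) ⬝ᵥ (w - x)) :
    ∀ᵐ x, DifferentiableAt ℝ T x := by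
  set S : (Fin n → ℝ) → Fin n → ℝ := fun x => x + T x with hS
  have hexp : ∀ x w, ‖w - x‖ ≤ n * ‖S w - S x‖ := by
    intro x w
    by_cases h0 : w - x = 0
    · rw [h0, norm_zero]; positivity
    have hpos : 0 < ‖w - x‖ := norm_pos_iff.mpr h0
    have h1 := sq_norm_le_dotProduct_self (w - x)
    have h2 : (S w - S x) ⬝ᵥ (w - x) = (w - x) ⬝ᵥ (w - x) + (T w - T x) ⬝ᵥ (w - x) := by
      rw [← add_dotProduct]; congr 1; simp only [hS]; abel
    have h3 := dotProduct_le_card_mul_norm (S w - S x) (w - x)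
    have h4 := hmono x w
    have h5 : ‖w - x‖ * ‖w - x‖ ≤ (n * ‖S w - S x‖) * ‖w - x‖ := by nlinarith
    exact le_of_mul_le_mul_right h5 hpos
  have hinj : Function.Injective S := fun w x hwx => by
    have := hexp x w
    rw [hwx, sub_self, norm_zero, mul_zero] at this
    exact sub_eq_zero.mp (norm_le_zero_iff.mp this)
  have hlip : LipschitzOnWith (n : NNReal) (Function.invFun S) (Set.range S) := by
    refine LipschitzOnWith.of_dist_le_mul ?_
    rintro _ ⟨w, rfl⟩ _ ⟨x, rfl⟩
    rw [Function.leftInverse_invFun hinj, Function.leftInverse_invFun hinj, dist_eq_norm,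
      dist_eq_norm]
    exact hexp x w
  obtain ⟨F, hF, hFS⟩ := hlip.extend_pi
  have hFS' : ∀ x, F (S x) = x := fun x => by
    rw [← hFS ⟨x, rfl⟩, Function.leftInverse_invFun hinj]
  have hnull1 : volume (F '' {z | ¬ DifferentiableAt ℝ F z}) = 0 := by
    have h0 : volume {z | ¬ DifferentiableAt ℝ F z} = 0 := hF.ae_differentiableAt
    rw [← hausdorffMeasure_pi_real] at h0 ⊢
    refine le_antisymm ((hF.hausdorffMeasure_image_le (by positivity) _).trans ?_) zero_le
    rw [h0, mul_zero]
  have hnull2 : volume (F '' {z | DifferentiableAt ℝ F z ∧ (fderiv ℝ F z).det = 0}) = 0 :=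
    addHaar_image_eq_zero_of_det_fderivWithin_eq_zero volume
      (fun z hz => hz.1.hasFDerivAt.hasFDerivWithinAt) fun z hz => hz.2
  filter_upwards [measure_eq_zero_iff_ae_notMem.mp hnull1,
    measure_eq_zero_iff_ae_notMem.mp hnull2] with x hx1 hx2
  have hd : DifferentiableAt ℝ F (S x) := by
    by_contra h
    exact hx1 ⟨S x, h, hFS' x⟩
  have hdet : (fderiv ℝ F (S x)).det ≠ 0 := fun h => hx2 ⟨S x, ⟨hd, h⟩, hFS' x⟩
  have hScont : Continuous S := continuous_id.add hT
  have h1 := HasFDerivAt.of_local_left_inverse (g := S) (a := x) (f := F)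
    (f' := (fderiv ℝ F (S x)).toContinuousLinearEquivOfDetNeZero hdet)
    hScont.continuousAt (by simpa using hd.hasFDerivAt) (Filter.Eventually.of_forall hFS')
  have h2 : T = fun y => S y - y := by ext y; simp [hS]
  rw [h2]
  exact h1.differentiableAt.sub differentiableAt_id

/-- The Hessian matrix of a convex function is positive semidefinite. -/
lemma posSemidef_of_hasFDerivAt_gradVec {n : ℕ} {Φ : (Fin n → ℝ) → ℝ}
    (hc : ConvexOn ℝ Set.univ Φ) (hd : Differentiable ℝ Φ) {x : Fin n → ℝ}
    {H : (Fin n → ℝ) →L[ℝ] (Fin n → ℝ)} (hH : HasFDerivAt (gradVec Φ) H x) :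
    (LinearMap.toMatrix' (H : (Fin n → ℝ) →ₗ[ℝ] (Fin n → ℝ))).PosSemidef := by
  have hsymm : ∀ v w, H v ⬝ᵥ w = H w ⬝ᵥ v := by
    let L : (Fin n → ℝ) →L[ℝ] (Fin n → ℝ) →L[ℝ] ℝ :=
      ∑ i, (ContinuousLinearMap.proj i : (Fin n → ℝ) →L[ℝ] ℝ).smulRight
        (ContinuousLinearMap.proj i : (Fin n → ℝ) →L[ℝ] ℝ)
    have hL : ∀ v w, L v w = v ⬝ᵥ w := fun v w => by
      simp [L, dotProduct]
    have h1 : fderiv ℝ Φ = fun y => L (gradVec Φ y) := by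
      ext1 y; ext1 v
      rw [hL, fderiv_apply_eq_gradVec_dotProduct]
    have h2 : HasFDerivAt (fderiv ℝ Φ) (L.comp H) x := by
      rw [h1]; exact L.hasFDerivAt.comp x hH
    intro v w
    have h3 := second_derivative_symmetric (fun y => (hd y).hasFDerivAt) h2 v w
    simpa [hL] using h3
  have hnn : ∀ v, 0 ≤ H v ⬝ᵥ v := by
    intro v
    have h1 : HasDerivAt (fun t : ℝ => x + t • v) v 0 := by
      simpa using ((hasDerivAt_id (0 : ℝ)).smul_const v).const_add x
    have h2 : HasDerivAt (fun t : ℝ => gradVec Φ (x + t • v)) (H v) 0 := by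
      refine HasFDerivAt.comp_hasDerivAt (0 : ℝ) (l := gradVec Φ) ?_ h1
      simpa using hH
    have h3 := (hasDerivAt_iff_tendsto_slope_zero.mp h2).mono_left (nhdsGT_le_nhdsNE 0)
    have h4 : Continuous fun u : Fin n → ℝ => u ⬝ᵥ v := by
      unfold dotProduct; fun_prop
    refine ge_of_tendsto ((h4.tendsto _).comp h3) ?_
    filter_upwards [self_mem_nhdsWithin] with t ht
    have ht' : 0 < t := ht
    have h5 := gradVec_monotone hc hd x (x + t • v)
    rw [add_sub_cancel_left, dotProduct_smul, smul_eq_mul] at h5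
    simp only [Function.comp, zero_add, zero_smul, add_zero, smul_dotProduct, smul_eq_mul]
    exact mul_nonneg (inv_nonneg.mpr ht'.le) (nonneg_of_mul_nonneg_right h5 ht')
  refine PosSemidef.of_dotProduct_mulVec_nonneg ?_ fun v => ?_
  · ext i j
    have := hsymm (Pi.single i 1) (Pi.single j 1)
    simpa [LinearMap.toMatrix'_apply] using this
  · rw [← toLin'_apply, toLin'_toMatrix']
    simpa [dotProduct_comm] using hnn v

lemma measure_eq_zero_of_density_bounds {n : ℕ} {T : (Fin n → ℝ) → Fin n → ℝ} (hT : Measurable T)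
    {v w : (Fin n → ℝ) → ℝ} (hw : Measurable w)
    (hmap : Measure.map T (volume.withDensity fun x => ENNReal.ofReal (v x)) =
      volume.withDensity fun x => ENNReal.ofReal (w x))
    {a b c : ℝ} (hb : 0 ≤ b) (hbc : b * c < a) {s : Set (Fin n → ℝ)} (hs : MeasurableSet s)
    (hsfin : volume s ≠ ∞) (hsd : ∀ x ∈ s, DifferentiableAt ℝ T x)
    (hsv : ∀ x ∈ s, a ≤ v x) (hsw : ∀ x ∈ s, w (T x) ≤ b)
    (hsdet : ∀ x ∈ s, |(fderiv ℝ T x).det| ≤ c) : volume s = 0 := by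
  set t : Set (Fin n → ℝ) := toMeasurable volume (T '' s) ∩ {y | w y ≤ b} with ht
  have htm : MeasurableSet t :=
    (measurableSet_toMeasurable _ _).inter (measurableSet_le hw measurable_const)
  have hst : s ⊆ T ⁻¹' t := fun x hx => ⟨subset_toMeasurable _ _ ⟨x, hx, rfl⟩, hsw x hx⟩
  have h1 : ENNReal.ofReal a * volume s ≤
      (volume.withDensity fun x => ENNReal.ofReal (v x)) s := by
    rw [withDensity_apply _ hs, ← setLIntegral_const]
    exact setLIntegral_mono' hs fun x hx => ENNReal.ofReal_le_ofReal (hsv x hx)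
  have h2 : (volume.withDensity fun x => ENNReal.ofReal (v x)) s ≤
      (volume.withDensity fun x => ENNReal.ofReal (w x)) t := by
    rw [← hmap, Measure.map_apply hT htm]
    exact measure_mono hst
  have h3 : (volume.withDensity fun x => ENNReal.ofReal (w x)) t ≤
      ENNReal.ofReal b * volume (T '' s) := by
    rw [withDensity_apply _ htm]
    calc ∫⁻ x in t, ENNReal.ofReal (w x) ≤ ∫⁻ _ in t, ENNReal.ofReal b :=
          setLIntegral_mono' htm fun x hx => ENNReal.ofReal_le_ofReal hx.2
      _ = ENNReal.ofReal b * volume t := setLIntegral_const _ _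
      _ ≤ _ := by
        refine mul_le_mul_right ?_ _
        exact (measure_mono Set.inter_subset_left).trans_eq (measure_toMeasurable (T '' s))
  have h4 : volume (T '' s) ≤ ENNReal.ofReal c * volume s := by
    refine (addHaar_image_le_lintegral_abs_det_fderiv volume hs
      fun x hx => (hsd x hx).hasFDerivAt.hasFDerivWithinAt).trans ?_
    rw [← setLIntegral_const]
    exact setLIntegral_mono' hs fun x hx => ENNReal.ofReal_le_ofReal (hsdet x hx)
  have h5 : ENNReal.ofReal a * volume s ≤ ENNReal.ofReal (b * c) * volume s := by
    rw [ENNReal.ofReal_mul hb, mul_assoc]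
    exact (h1.trans h2).trans (h3.trans (by gcongr))
  by_contra h0
  rw [ENNReal.mul_le_mul_iff_left h0 hsfin] at h5
  rcases s.eq_empty_or_nonempty with rfl | ⟨x, hx⟩
  · simp at h0
  have hc : 0 ≤ c := (abs_nonneg _).trans (hsdet x hx)
  rw [ENNReal.ofReal_le_ofReal_iff (mul_nonneg hb hc)] at h5
  linarith

/-- One half of the Monge–Ampère equation, almost everywhere: if an almost everywhere
differentiable map `T` transports the density `v` to the density `w`, then
`v ≤ (w ∘ T) |det DT|` almost everywhere. -/
lemma ae_le_mul_abs_det_of_map_eq {n : ℕ} {T : (Fin n → ℝ) → Fin n → ℝ} (hT : Continuous T)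
    (hdiff : ∀ᵐ x, DifferentiableAt ℝ T x)
    {v w : (Fin n → ℝ) → ℝ} (hv : Continuous v) (hw : Continuous w) (hw0 : ∀ y, 0 ≤ w y)
    (hmap : Measure.map T (volume.withDensity fun x => ENNReal.ofReal (v x)) =
      volume.withDensity fun x => ENNReal.ofReal (w x)) :
    ∀ᵐ x, v x ≤ w (T x) * |(fderiv ℝ T x).det| := by
  have hdetm : Measurable fun x => |(fderiv ℝ T x).det| :=
    (ContinuousLinearMap.continuous_det.measurable.comp (measurable_fderiv ℝ T)).abs
  set s : ℚ × ℚ × ℚ × ℕ → Set (Fin n → ℝ) := fun p =>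
    {x | DifferentiableAt ℝ T x} ∩ {x | (p.1 : ℝ) ≤ v x} ∩ {x | w (T x) ≤ p.2.1} ∩
      {x | |(fderiv ℝ T x).det| ≤ p.2.2.1} ∩ Metric.closedBall 0 p.2.2.2 with hs
  have hnull : ∀ p : ℚ × ℚ × ℚ × ℕ, 0 ≤ (p.2.1 : ℝ) ∧ (p.2.1 : ℝ) * p.2.2.1 < p.1 →
      ∀ᵐ x, x ∉ s p := by
    intro p hp
    refine measure_eq_zero_iff_ae_notMem.mp ?_
    refine measure_eq_zero_of_density_bounds hT.measurable hw.measurable hmap hp.1 hp.2 ?_ ?_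
      (fun x hx => hx.1.1.1.1) (fun x hx => hx.1.1.1.2) (fun x hx => hx.1.1.2)
      (fun x hx => hx.1.2)
    · refine ((((measurableSet_of_differentiableAt ℝ T).inter ?_).inter ?_).inter ?_).inter
        Metric.isClosed_closedBall.measurableSet
      · exact measurableSet_le measurable_const hv.measurable
      · exact measurableSet_le (hw.comp hT).measurable measurable_const
      · exact measurableSet_le hdetm measurable_const
    · exact ((measure_mono Set.inter_subset_right).trans_lt
        measure_closedBall_lt_top).ne
  have hall : ∀ᵐ x, ∀ p : ℚ × ℚ × ℚ × ℕ,
      0 ≤ (p.2.1 : ℝ) ∧ (p.2.1 : ℝ) * p.2.2.1 < p.1 → x ∉ s p := by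
    rw [ae_all_iff]
    intro p
    by_cases hp : 0 ≤ (p.2.1 : ℝ) ∧ (p.2.1 : ℝ) * p.2.2.1 < p.1
    · filter_upwards [hnull p hp] with x hx _ using hx
    · exact Filter.Eventually.of_forall fun x h => absurd h hp
  filter_upwards [hdiff, hall] with x hx hp
  by_contra! hlt
  obtain ⟨a, ha1, ha2⟩ := exists_rat_btwn hlt
  have hcont : Filter.Tendsto (fun δ : ℝ => (w (T x) + δ) * (|(fderiv ℝ T x).det| + δ))
      (nhdsWithin 0 (Set.Ioi 0)) (nhds (w (T x) * |(fderiv ℝ T x).det|)) := by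
    have : Continuous fun δ : ℝ => (w (T x) + δ) * (|(fderiv ℝ T x).det| + δ) := by fun_prop
    have := this.tendsto 0
    simp only [add_zero] at this
    exact this.mono_left nhdsWithin_le_nhds
  obtain ⟨δ, hδ1, hδ2⟩ := ((hcont.eventually (gt_mem_nhds ha1)).and self_mem_nhdsWithin).exists
  have hδ : 0 < δ := hδ2
  obtain ⟨b, hb1, hb2⟩ := exists_rat_btwn (show w (T x) < w (T x) + δ by linarith)
  obtain ⟨c, hc1, hc2⟩ := exists_rat_btwn
    (show |(fderiv ℝ T x).det| < |(fderiv ℝ T x).det| + δ by linarith)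
  obtain ⟨k, hk⟩ := exists_nat_ge ‖x‖
  have hb0 : (0 : ℝ) ≤ b := (hw0 _).trans hb1.le
  refine hp (a, b, c, k) ⟨hb0, lt_of_le_of_lt ?_ hδ1⟩
    ⟨⟨⟨⟨hx, ha2.le⟩, hb1.le⟩, hc1.le⟩, by simpa using hk⟩
  exact mul_le_mul hb2.le hc2.le ((abs_nonneg _).trans hc1.le) (by linarith [hw0 (T x)])

/-- An index `j ≤ N` maximizing `u j x` among `u 0 x, …, u N x`. -/
def bestIndex {α : Type*} (u : ℕ → α → ℝ) : ℕ → α → ℕ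
  | 0, _ => 0
  | N + 1, x => if u (bestIndex u N x) x < u (N + 1) x then N + 1 else bestIndex u N x

lemma le_bestIndex {α : Type*} (u : ℕ → α → ℝ) (N : ℕ) (x : α) :
    ∀ j ≤ N, u j x ≤ u (bestIndex u N x) x := by
  induction N with
  | zero =>
    intro j hj
    rw [Nat.le_zero.mp hj]; rfl
  | succ N ih =>
    intro j hj
    rw [bestIndex]
    split_ifs with h
    · rcases Nat.le_succ_iff.mp hj with h1 | rfl
      · exact (ih j h1).trans h.le
      · exact le_rfl
    · rcases Nat.le_succ_iff.mp hj with h1 | rfl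
      · exact ih j h1
      · exact not_lt.mp h

lemma bestIndex_le {α : Type*} (u : ℕ → α → ℝ) (N : ℕ) (x : α) : bestIndex u N x ≤ N := by
  induction N with
  | zero => exact le_rfl
  | succ N ih =>
    rw [bestIndex]
    split_ifs
    · exact le_rfl
    · exact ih.trans N.le_succ

lemma measurable_apply_of_countable {α : Type*} [MeasurableSpace α] {u : ℕ → α → ℝ}
    (hu : ∀ j, Measurable (u j)) {i : α → ℕ} (hi : Measurable i) :
    Measurable fun x => u (i x) x := by
  have h : Measurable fun p : ℕ × α => u p.1 p.2 := measurable_from_prod_countable_right hu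
  exact h.comp (hi.prodMk measurable_id)

lemma measurable_bestIndex {α : Type*} [MeasurableSpace α] {u : ℕ → α → ℝ}
    (hu : ∀ j, Measurable (u j)) (N : ℕ) : Measurable (bestIndex u N) := by
  induction N with
  | zero => exact measurable_const
  | succ N ih =>
    have : bestIndex u (N + 1) =
        fun x => if u (bestIndex u N x) x < u (N + 1) x then N + 1 else bestIndex u N x := rfl
    rw [this]
    exact Measurable.ite (measurableSet_lt (measurable_apply_of_countable hu ih) (hu _))
      measurable_const ih

/-- Midpoint log-concavity of the determinant for linear maps with positive semidefinite
matrices. -/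
lemma exp_half_add_le_abs_det {n : ℕ} {H₁ H₂ : (Fin n → ℝ) →L[ℝ] (Fin n → ℝ)}
    (h₁ : (LinearMap.toMatrix' (H₁ : (Fin n → ℝ) →ₗ[ℝ] (Fin n → ℝ))).PosSemidef)
    (h₂ : (LinearMap.toMatrix' (H₂ : (Fin n → ℝ) →ₗ[ℝ] (Fin n → ℝ))).PosSemidef)
    {a₁ a₂ ε : ℝ} (ha₁ : Real.exp a₁ ≤ |H₁.det|) (ha₂ : Real.exp a₂ ≤ |H₂.det|) (hε : 0 ≤ ε) :
    Real.exp ((2 : ℝ)⁻¹ * (a₁ + a₂)) ≤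
      |((2 : ℝ)⁻¹ • (H₁ + H₂) + ε • ContinuousLinearMap.id ℝ (Fin n → ℝ)).det| := by
  have hdet : ∀ H : (Fin n → ℝ) →L[ℝ] (Fin n → ℝ),
      H.det = (LinearMap.toMatrix' (H : (Fin n → ℝ) →ₗ[ℝ] (Fin n → ℝ))).det := fun H => by
    rw [LinearMap.det_toMatrix']
  have hpos : ∀ {H : (Fin n → ℝ) →L[ℝ] (Fin n → ℝ)} {a : ℝ},
      (LinearMap.toMatrix' (H : (Fin n → ℝ) →ₗ[ℝ] (Fin n → ℝ))).PosSemidef →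
      Real.exp a ≤ |H.det| →
      (LinearMap.toMatrix' (H : (Fin n → ℝ) →ₗ[ℝ] (Fin n → ℝ))).PosDef := by
    intro H a hH ha
    refine hH.posDef_iff_isUnit.mpr ((isUnit_iff_isUnit_det _).mpr ?_)
    rw [isUnit_iff_ne_zero, ← hdet, ← abs_pos]
    exact (Real.exp_pos a).trans_le ha
  have hp₁ := hpos h₁ ha₁
  have hp₂ := hpos h₂ ha₂
  rw [hdet, abs_of_pos hp₁.det_pos] at ha₁
  rw [hdet, abs_of_pos hp₂.det_pos] at ha₂
  refine le_of_sq_le_sq ?_ (abs_nonneg _)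
  have h3 := det_mul_det_le_sq hp₁ hp₂ hε
  rw [sq_abs, hdet]
  have h4 : LinearMap.toMatrix' (((2 : ℝ)⁻¹ • (H₁ + H₂) +
      ε • ContinuousLinearMap.id ℝ (Fin n → ℝ) :
        (Fin n → ℝ) →L[ℝ] (Fin n → ℝ)) : (Fin n → ℝ) →ₗ[ℝ] (Fin n → ℝ)) =
      (2 : ℝ)⁻¹ • (LinearMap.toMatrix' (H₁ : (Fin n → ℝ) →ₗ[ℝ] (Fin n → ℝ)) +
        LinearMap.toMatrix' (H₂ : (Fin n → ℝ) →ₗ[ℝ] (Fin n → ℝ))) + ε • 1 := by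
    rw [← LinearMap.toMatrix'_id]
    simp only [← map_add, ← map_smul]
    rfl
  rw [h4]
  refine le_trans ?_ h3
  have h5 : Real.exp ((2 : ℝ)⁻¹ * (a₁ + a₂)) ^ 2 = Real.exp a₁ * Real.exp a₂ := by
    rw [sq, ← Real.exp_add, ← Real.exp_add]; congr 1; ring
  rw [h5]
  exact mul_le_mul ha₁ ha₂ (Real.exp_pos _).le hp₁.det_pos.le

/-- The exponent controlling the symmetrized Monge–Ampère inequality at displacement `h`. -/
def symmExponent {n : ℕ} (V W : (Fin n → ℝ) → ℝ) (T : (Fin n → ℝ) → Fin n → ℝ) (ε : ℝ)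
    (h x : Fin n → ℝ) : ℝ :=
  (2 : ℝ)⁻¹ * ((W (T (x + h)) - V (x + h)) + (W (T (x - h)) - V (x - h))) -
    W ((2 : ℝ)⁻¹ • (T (x + h) + T (x - h)) + ε • x)

/-- The symmetrized gradients selected by maximality form a monotone map, hence become
injective after adding a positive multiple of the identity. -/
lemma injective_bestIndex_gradVec {n : ℕ} {Φ : (Fin n → ℝ) → ℝ} (hc : ConvexOn ℝ Set.univ Φ)
    (hd : Differentiable ℝ Φ) (d : ℕ → Fin n → ℝ) (γ : ℕ → ℝ) (N : ℕ) {ε : ℝ} (hε : 0 < ε)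
    {i : (Fin n → ℝ) → ℕ}
    (hi : i = bestIndex (fun j x => (2 : ℝ)⁻¹ * (Φ (x + d j) + Φ (x - d j)) - γ j) N) :
    Function.Injective fun x =>
      (2 : ℝ)⁻¹ • (gradVec Φ (x + d (i x)) + gradVec Φ (x - d (i x))) + ε • x := by
  set u : ℕ → (Fin n → ℝ) → ℝ :=
    fun j x => (2 : ℝ)⁻¹ * (Φ (x + d j) + Φ (x - d j)) - γ j with hu
  set p : (Fin n → ℝ) → Fin n → ℝ :=
    fun x => (2 : ℝ)⁻¹ • (gradVec Φ (x + d (i x)) + gradVec Φ (x - d (i x))) with hp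
  have hsub : ∀ x w, u (i x) x + p x ⬝ᵥ (w - x) ≤ u (i w) w := by
    intro x w
    have h1 : u (i x) w ≤ u (i w) w := by
      have := le_bestIndex u N w (i x) (by rw [hi]; exact bestIndex_le u N x)
      rwa [← hi] at this
    refine le_trans ?_ h1
    have h2 := add_gradVec_dotProduct_le hc hd (x + d (i x)) (w + d (i x))
    have h3 := add_gradVec_dotProduct_le hc hd (x - d (i x)) (w - d (i x))
    rw [add_sub_add_right_eq_sub] at h2
    rw [sub_sub_sub_cancel_right] at h3
    simp only [hu, hp, smul_dotProduct, add_dotProduct, smul_eq_mul]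
    linarith
  intro x w hxw
  have h1 := hsub x w
  have h2 := hsub w x
  have h3 : p x - p w = ε • (w - x) := by
    have : p x + ε • x = p w + ε • w := hxw
    rw [smul_sub]
    linear_combination (exp := 1) this
  have h4 : (p x - p w) ⬝ᵥ (w - x) ≤ 0 := by
    rw [sub_dotProduct]
    rw [← neg_sub w x, dotProduct_neg] at h2
    linarith
  rw [h3, smul_dotProduct, smul_eq_mul] at h4
  have h5 := sq_norm_le_dotProduct_self (w - x)
  have h6 : ‖w - x‖ ^ 2 ≤ 0 := h5.trans (nonpos_of_mul_nonpos_right h4 hε)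
  have h7 : ‖w - x‖ = 0 := by nlinarith [norm_nonneg (w - x)]
  exact (sub_eq_zero.mp (norm_eq_zero.mp h7)).symm

/-- The transport of mass along the selected symmetrized gradients does not exceed the total
mass. -/
lemma lintegral_exp_symmExponent_le {n : ℕ} {V W Φ : (Fin n → ℝ) → ℝ}
    (hV : Continuous V) (hW : Continuous W)
    (hν : IsProbabilityMeasure
      (volume.withDensity fun x : Fin n → ℝ => ENNReal.ofReal (Real.exp (-W x))))
    (hc : ConvexOn ℝ Set.univ Φ) (hd : Differentiable ℝ Φ)
    (htransport : Measure.map (gradVec Φ)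
        (volume.withDensity fun x : Fin n → ℝ => ENNReal.ofReal (Real.exp (-V x))) =
      volume.withDensity fun x : Fin n → ℝ => ENNReal.ofReal (Real.exp (-W x)))
    (d : ℕ → Fin n → ℝ) (γ : ℕ → ℝ) (N : ℕ) {ε : ℝ} (hε : 0 < ε)
    {i : (Fin n → ℝ) → ℕ}
    (hi : i = bestIndex (fun j x => (2 : ℝ)⁻¹ * (Φ (x + d j) + Φ (x - d j)) - γ j) N) :
    ∫⁻ x, ENNReal.ofReal (Real.exp (symmExponent V W (gradVec Φ) ε (d (i x)) x)) ≤ 1 := by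
  set T := gradVec Φ with hT
  have hTc : Continuous T := continuous_gradVec hc hd
  have hTd : ∀ᵐ x, DifferentiableAt ℝ T x :=
    ae_differentiableAt_of_monotone hTc (gradVec_monotone hc hd)
  have hMA : ∀ᵐ x, Real.exp (-V x) ≤ Real.exp (-W (T x)) * |(fderiv ℝ T x).det| :=
    ae_le_mul_abs_det_of_map_eq hTc hTd (by fun_prop) (by fun_prop)
      (fun y => (Real.exp_pos _).le) htransport
  have him : Measurable i := by
    rw [hi]
    refine measurable_bestIndex (fun j => ?_) N
    have := hd.continuous
    exact Continuous.measurable (by fun_prop)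
  have hinj := injective_bestIndex_gradVec hc hd d γ N hε hi
  rw [← hT] at hinj
  set P : ℕ → (Fin n → ℝ) → Fin n → ℝ :=
    fun j x => (2 : ℝ)⁻¹ • (T (x + d j) + T (x - d j)) + ε • x with hP
  set D : ℕ → (Fin n → ℝ) → (Fin n → ℝ) →L[ℝ] (Fin n → ℝ) :=
    fun j x => (2 : ℝ)⁻¹ • (fderiv ℝ T (x + d j) + fderiv ℝ T (x - d j)) +
      ε • ContinuousLinearMap.id ℝ (Fin n → ℝ) with hD
  set G : ℕ → Set (Fin n → ℝ) := fun j =>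
    {x | DifferentiableAt ℝ T (x + d j)} ∩ {x | DifferentiableAt ℝ T (x - d j)} with hG
  set s : ℕ → Set (Fin n → ℝ) := fun j => i ⁻¹' {j} ∩ G j with hs
  have him' : ∀ j, MeasurableSet (i ⁻¹' {j}) := fun j => him (measurableSet_singleton j)
  have hsm : ∀ j, MeasurableSet (s j) := fun j =>
    (him' j).inter
      (((measurableSet_of_differentiableAt ℝ T).preimage (measurable_add_const (d j))).inter
        ((measurableSet_of_differentiableAt ℝ T).preimage (measurable_sub_const (d j))))
  have hPd : ∀ j, ∀ x ∈ s j, HasFDerivWithinAt (P j) (D j x) (s j) x := by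
    rintro j x ⟨-, h1, h2⟩
    have h1' : HasFDerivAt (fun y => T (y + d j)) (fderiv ℝ T (x + d j)) x :=
      (hasFDerivAt_comp_add_right (d j)).mpr (DifferentiableAt.hasFDerivAt h1)
    have h2' : HasFDerivAt (fun y => T (y - d j)) (fderiv ℝ T (x - d j)) x :=
      (hasFDerivAt_comp_sub (d j)).mpr (DifferentiableAt.hasFDerivAt h2)
    exact (((h1'.add h2').const_smul (2 : ℝ)⁻¹).add
      ((hasFDerivAt_id x).const_smul ε)).hasFDerivWithinAt
  have hPinj : ∀ j k, ∀ x ∈ s j, ∀ y ∈ s k, P j x = P k y → x = y := by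
    rintro j k x ⟨hx, -⟩ y ⟨hy, -⟩ hxy
    apply hinj
    rw [Set.mem_preimage, Set.mem_singleton_iff] at hx hy
    simp only [hx, hy]
    exact hxy
  have hPinjOn : ∀ j, Set.InjOn (P j) (s j) := fun j x hx y hy => hPinj j j x hx y hy
  have hshift : ∀ j, ∀ᵐ x, x ∈ G j ∧
      Real.exp (symmExponent V W T ε (d j) x) ≤ |(D j x).det| * Real.exp (-W (P j x)) := by
    intro j
    have ha := (measurePreserving_add_right volume (d j)).quasiMeasurePreserving.ae
      (hTd.and hMA)
    have hb := (measurePreserving_sub_right volume (d j)).quasiMeasurePreserving.ae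
      (hTd.and hMA)
    filter_upwards [ha, hb] with x hxa hxb
    refine ⟨⟨hxa.1, hxb.1⟩, ?_⟩
    have hexp : ∀ z, Real.exp (-V z) ≤ Real.exp (-W (T z)) * |(fderiv ℝ T z).det| →
        Real.exp (W (T z) - V z) ≤ |(fderiv ℝ T z).det| := by
      intro z hz
      have := mul_le_mul_of_nonneg_left hz (Real.exp_pos (W (T z))).le
      rwa [← mul_assoc, ← Real.exp_add, ← Real.exp_add, add_neg_cancel, Real.exp_zero, one_mul,
        ← sub_eq_add_neg] at this
    have h1 := exp_half_add_le_abs_det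
      (posSemidef_of_hasFDerivAt_gradVec hc hd hxa.1.hasFDerivAt)
      (posSemidef_of_hasFDerivAt_gradVec hc hd hxb.1.hasFDerivAt)
      (hexp _ hxa.2) (hexp _ hxb.2) hε.le
    rw [symmExponent, sub_eq_add_neg, Real.exp_add]
    exact mul_le_mul_of_nonneg_right h1 (Real.exp_pos _).le
  have hpart : ∀ j, ∫⁻ x in i ⁻¹' {j},
      ENNReal.ofReal (Real.exp (symmExponent V W T ε (d (i x)) x)) ≤
      ∫⁻ y in P j '' s j, ENNReal.ofReal (Real.exp (-W y)) := by
    intro j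
    rw [lintegral_image_eq_lintegral_abs_det_fderiv_mul volume (hsm j) (hPd j) (hPinjOn j)]
    have hae : (i ⁻¹' {j} : Set (Fin n → ℝ)) =ᵐ[volume] s j := by
      filter_upwards [hshift j] with x hx
      refine propext ⟨fun h => ⟨h, hx.1⟩, fun h => h.1⟩
    rw [setLIntegral_congr hae]
    refine lintegral_mono_ae ?_
    filter_upwards [ae_restrict_of_ae (hshift j), ae_restrict_mem (hsm j)] with x hx hxs
    have hij : i x = j := hxs.1
    rw [hij, ← ENNReal.ofReal_mul (abs_nonneg _)]
    exact ENNReal.ofReal_le_ofReal hx.2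
  have hcover : (⋃ j, i ⁻¹' {j}) = (Set.univ : Set (Fin n → ℝ)) :=
    Set.eq_univ_of_forall fun x => Set.mem_iUnion.mpr ⟨i x, rfl⟩
  calc ∫⁻ x, ENNReal.ofReal (Real.exp (symmExponent V W T ε (d (i x)) x))
      = ∑' j, ∫⁻ x in i ⁻¹' {j},
          ENNReal.ofReal (Real.exp (symmExponent V W T ε (d (i x)) x)) := by
        rw [← lintegral_iUnion him', hcover, Measure.restrict_univ]
        exact fun j k hjk => Disjoint.preimage i (by simpa using hjk)
    _ ≤ ∑' j, ∫⁻ y in P j '' s j, ENNReal.ofReal (Real.exp (-W y)) :=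
        ENNReal.tsum_le_tsum hpart
    _ = ∫⁻ y in ⋃ j, P j '' s j, ENNReal.ofReal (Real.exp (-W y)) := by
        rw [lintegral_iUnion fun j =>
          measurable_image_of_fderivWithin (hsm j) (hPd j) (hPinjOn j)]
        intro j k hjk
        refine Set.disjoint_left.mpr ?_
        rintro _ ⟨x, hx, rfl⟩ ⟨y, hy, hxy⟩
        obtain rfl := hPinj k j y hy x hx hxy
        exact hjk (hx.1.symm.trans hy.1)
    _ ≤ ∫⁻ y, ENNReal.ofReal (Real.exp (-W y)) := setLIntegral_le_lintegral _ _
    _ = 1 := by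
        rw [← setLIntegral_univ, ← withDensity_apply _ MeasurableSet.univ]
        exact hν.measure_univ

lemma continuous_quadForm {n : ℕ} (M : Matrix (Fin n) (Fin n) ℝ) :
    Continuous fun x : Fin n → ℝ => M.mulVec x ⬝ᵥ x := by
  unfold dotProduct mulVec dotProduct
  fun_prop

lemma quadForm_parallelogram {n : ℕ} (M : Matrix (Fin n) (Fin n) ℝ) (p k : Fin n → ℝ) :
    M.mulVec (p + k) ⬝ᵥ (p + k) + M.mulVec (p - k) ⬝ᵥ (p - k) =
      2 * (M.mulVec p ⬝ᵥ p + M.mulVec k ⬝ᵥ k) := by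
  simp only [mulVec_add, mulVec_sub, add_dotProduct, sub_dotProduct, dotProduct_add,
    dotProduct_sub]
  ring

/-- The value of a convex function at a midpoint is at most the average of the end values. -/
lemma ConvexOn.le_half_add {n : ℕ} {f : (Fin n → ℝ) → ℝ} (hf : ConvexOn ℝ Set.univ f)
    (p k : Fin n → ℝ) : f p ≤ (2 : ℝ)⁻¹ * (f (p + k) + f (p - k)) := by
  have h := hf.2 (Set.mem_univ (p + k)) (Set.mem_univ (p - k))
    (by norm_num : (0 : ℝ) ≤ 2⁻¹) (by norm_num : (0 : ℝ) ≤ 2⁻¹) (by norm_num)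
  have hp : (2 : ℝ)⁻¹ • (p + k) + (2 : ℝ)⁻¹ • (p - k) = p := by
    rw [← smul_add, add_add_sub_cancel, ← two_smul ℝ p, smul_smul]; norm_num
  rw [hp, smul_eq_mul, smul_eq_mul] at h
  linarith

lemma isCompact_setOf_quadForm_le {n : ℕ} {G : Matrix (Fin n) (Fin n) ℝ} (hG : G.PosDef)
    (κ : ℝ) : IsCompact {h : Fin n → ℝ | G.mulVec h ⬝ᵥ h ≤ κ} := by
  obtain ⟨C, hC⟩ : ∃ C : Matrix (Fin n) (Fin n) ℝ, G = Cᴴ * C := by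
    open scoped MatrixOrder in
    exact CStarAlgebra.nonneg_iff_eq_star_mul_self.mp hG.posSemidef.nonneg
  have hCu : IsUnit C.det := by
    rw [isUnit_iff_ne_zero]
    intro h0
    have := hG.det_pos
    rw [hC, det_mul, h0] at this
    simp at this
  have hcont : Continuous fun y : Fin n → ℝ => C⁻¹.mulVec y := by
    unfold mulVec dotProduct; fun_prop
  refine ((isCompact_closedBall (0 : Fin n → ℝ) (Real.sqrt κ)).image hcont).of_isClosed_subset
    (isClosed_le (continuous_quadForm G) continuous_const) fun h hh => ?_
  refine ⟨C.mulVec h, ?_, by simp [mulVec_mulVec, nonsing_inv_mul _ hCu]⟩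
  have h1 : C.mulVec h ⬝ᵥ C.mulVec h = G.mulVec h ⬝ᵥ h := by
    rw [hC, ← mulVec_mulVec, conjTranspose_eq_transpose_of_trivial, mulVec_transpose,
      ← dotProduct_mulVec]
  rw [mem_closedBall_zero_iff]
  refine Real.le_sqrt_of_sq_le ((sq_norm_le_dotProduct_self _).trans ?_)
  rw [h1]
  exact hh

/-- A logarithmic barrier on `{q < m}`, for the quadratic form `q` of `G`. It lies above
`q / 2` and converges to it as `m → ∞`. -/
def barrier {n : ℕ} (G : Matrix (Fin n) (Fin n) ℝ) (m : ℝ) (h : Fin n → ℝ) : ℝ :=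
  -(m / 2) * Real.log (1 - (G.mulVec h ⬝ᵥ h) / m)

lemma one_sub_div_pos {q m : ℝ} (hm : 0 < m) (hq : q < m) : 0 < 1 - q / m := by
  rw [sub_pos, div_lt_one hm]; exact hq

lemma continuousAt_barrier {n : ℕ} {G : Matrix (Fin n) (Fin n) ℝ} {m : ℝ} (hm : 0 < m)
    {h : Fin n → ℝ} (hh : G.mulVec h ⬝ᵥ h < m) : ContinuousAt (barrier G m) h := by
  have hq := continuous_quadForm G
  refine continuousAt_const.mul (ContinuousAt.log ?_ (one_sub_div_pos hm hh).ne')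
  exact Continuous.continuousAt (by fun_prop)

/-- The symmetrized second difference at `x`, penalized by the barrier. -/
def penalizedAverage {n : ℕ} (Φ : (Fin n → ℝ) → ℝ) (G : Matrix (Fin n) (Fin n) ℝ) (m : ℝ)
    (x h : Fin n → ℝ) : ℝ :=
  (2 : ℝ)⁻¹ * (Φ (x + h) + Φ (x - h)) - barrier G m h

lemma continuousAt_penalizedAverage {n : ℕ} {Φ : (Fin n → ℝ) → ℝ} (hΦ : Continuous Φ)
    {G : Matrix (Fin n) (Fin n) ℝ} {m : ℝ} (hm : 0 < m) (x : Fin n → ℝ)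
    {h : Fin n → ℝ} (hh : G.mulVec h ⬝ᵥ h < m) :
    ContinuousAt (penalizedAverage Φ G m x) h := by
  refine ContinuousAt.sub (Continuous.continuousAt ?_) (continuousAt_barrier hm hh)
  fun_prop

/-- Superlevel sets of the penalized average stay away from the boundary of the domain. -/
lemma exists_lt_forall_quadForm_le {n : ℕ} {Φ : (Fin n → ℝ) → ℝ} (hΦ : Continuous Φ)
    {G : Matrix (Fin n) (Fin n) ℝ} (hG : G.PosDef) {m : ℝ} (hm : 0 < m) (x : Fin n → ℝ) (a : ℝ) :
    ∃ κ < m, ∀ h, G.mulVec h ⬝ᵥ h < m → a ≤ penalizedAverage Φ G m x h →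
      G.mulVec h ⬝ᵥ h ≤ κ := by
  have hcont : Continuous fun h : Fin n → ℝ => (2 : ℝ)⁻¹ * (Φ (x + h) + Φ (x - h)) := by fun_prop
  obtain ⟨C, hC⟩ := (isCompact_setOf_quadForm_le hG m).bddAbove_image hcont.continuousOn
  refine ⟨m * (1 - Real.exp (-(2 / m * (C - a)))), ?_, fun h hh ha => ?_⟩
  · nlinarith [Real.exp_pos (-(2 / m * (C - a)))]
  · have h1 : (2 : ℝ)⁻¹ * (Φ (x + h) + Φ (x - h)) ≤ C := hC ⟨h, hh.le, rfl⟩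
    have h2 : -(m / 2) * Real.log (1 - (G.mulVec h ⬝ᵥ h) / m) ≤ C - a := by
      rw [penalizedAverage, barrier] at ha
      linarith
    have h3 : -(2 / m * (C - a)) ≤ Real.log (1 - (G.mulVec h ⬝ᵥ h) / m) := by
      have := mul_le_mul_of_nonneg_left h2 (by positivity : 0 ≤ 2 / m)
      have h4 : 2 / m * (-(m / 2) * Real.log (1 - (G.mulVec h ⬝ᵥ h) / m))
          = -Real.log (1 - (G.mulVec h ⬝ᵥ h) / m) := by field_simp
      linarith
    rw [Real.le_log_iff_exp_le (one_sub_div_pos hm hh)] at h3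
    have h5 : (G.mulVec h ⬝ᵥ h) / m ≤ 1 - Real.exp (-(2 / m * (C - a))) := by linarith
    rw [div_le_iff₀ hm] at h5
    linarith

/-- First order optimality condition for the penalized average. -/
lemma half_smul_gradVec_sub_eq {n : ℕ} {Φ : (Fin n → ℝ) → ℝ} (hd : Differentiable ℝ Φ)
    {G : Matrix (Fin n) (Fin n) ℝ} (hG : G.IsHermitian) {m : ℝ} (hm : 0 < m)
    {x h : Fin n → ℝ} (hh : G.mulVec h ⬝ᵥ h < m)
    (hmax : ∀ k, G.mulVec k ⬝ᵥ k < m → penalizedAverage Φ G m x k ≤ penalizedAverage Φ G m x h) :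
    (2 : ℝ)⁻¹ • (gradVec Φ (x + h) - gradVec Φ (x - h)) =
      (1 - (G.mulVec h ⬝ᵥ h) / m)⁻¹ • G.mulVec h := by
  have hpos := one_sub_div_pos hm hh
  have hdir : ∀ v, (2 : ℝ)⁻¹ * (gradVec Φ (x + h) ⬝ᵥ v - gradVec Φ (x - h) ⬝ᵥ v) -
      (1 - (G.mulVec h ⬝ᵥ h) / m)⁻¹ * (G.mulVec h ⬝ᵥ v) = 0 := by
    intro v
    have hsym : G.mulVec v ⬝ᵥ h = G.mulVec h ⬝ᵥ v := by
      have : Gᵀ = G := by simpa [conjTranspose_eq_transpose_of_trivial] using hG.eq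
      conv_lhs => rw [← this, mulVec_transpose, ← dotProduct_mulVec, dotProduct_comm]
    have h1 : HasDerivAt (fun s : ℝ => Φ ((x + h) + s • v)) (gradVec Φ (x + h) ⬝ᵥ v) 0 := by
      simpa using hasDerivAt_comp_add_smul hd (x + h) v 0
    have h2 : HasDerivAt (fun s : ℝ => Φ ((x - h) + s • (-v))) (-(gradVec Φ (x - h) ⬝ᵥ v)) 0 := by
      simpa using hasDerivAt_comp_add_smul hd (x - h) (-v) 0
    have h3 : HasDerivAt (fun s : ℝ => G.mulVec (h + s • v) ⬝ᵥ (h + s • v))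
        (2 * (G.mulVec h ⬝ᵥ v)) 0 := by
      have heq : (fun s : ℝ => G.mulVec (h + s • v) ⬝ᵥ (h + s • v)) = fun s : ℝ =>
          G.mulVec h ⬝ᵥ h + s * (2 * (G.mulVec h ⬝ᵥ v)) + s ^ 2 * (G.mulVec v ⬝ᵥ v) := by
        ext s
        simp only [mulVec_add, mulVec_smul, add_dotProduct, dotProduct_add, smul_dotProduct,
          dotProduct_smul, smul_eq_mul, hsym]
        ring
      rw [heq]
      have := (((hasDerivAt_id (0 : ℝ)).mul_const (2 * (G.mulVec h ⬝ᵥ v))).const_add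
        (G.mulVec h ⬝ᵥ h)).fun_add (((hasDerivAt_id (0 : ℝ)).fun_pow 2).mul_const (G.mulVec v ⬝ᵥ v))
      exact this.congr_deriv (by simp)
    have h4 : HasDerivAt (fun s : ℝ => penalizedAverage Φ G m x (h + s • v))
        ((2 : ℝ)⁻¹ * (gradVec Φ (x + h) ⬝ᵥ v + -(gradVec Φ (x - h) ⬝ᵥ v)) -
          -(m / 2) * (-(2 * (G.mulVec h ⬝ᵥ v) / m) / (1 - (G.mulVec h ⬝ᵥ h) / m))) 0 := by
      have h5 := ((h3.div_const m).const_sub 1).log (by simpa using hpos.ne')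
      have h6 := ((h1.fun_add h2).const_mul (2 : ℝ)⁻¹).fun_sub (h5.const_mul (-(m / 2)))
      have heq : (fun s : ℝ => penalizedAverage Φ G m x (h + s • v)) =
          fun s : ℝ => (2 : ℝ)⁻¹ * (Φ ((x + h) + s • v) + Φ ((x - h) + s • (-v))) -
            -(m / 2) * Real.log (1 - (G.mulVec (h + s • v) ⬝ᵥ (h + s • v)) / m) := by
        ext s
        rw [penalizedAverage, barrier, add_assoc, smul_neg, ← sub_eq_add_neg, sub_sub]
      rw [heq]
      exact h6.congr_deriv (by simp)
    have hloc : IsLocalMax (fun s : ℝ => penalizedAverage Φ G m x (h + s • v)) 0 := by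
      have hc : Continuous fun s : ℝ => G.mulVec (h + s • v) ⬝ᵥ (h + s • v) :=
        (continuous_quadForm G).comp (by fun_prop)
      have hlt : ∀ᶠ s : ℝ in nhds 0, G.mulVec (h + s • v) ⬝ᵥ (h + s • v) < m :=
        hc.continuousAt.eventually (gt_mem_nhds (by simpa using hh))
      filter_upwards [hlt] with s hs
      simpa using hmax _ hs
    have h7 := hloc.hasDerivAt_eq_zero h4
    rw [← h7]
    field_simp
    ring
  ext i
  have := hdir (Pi.single i 1)
  simp only [dotProduct_single, mul_one] at this
  simp only [Pi.smul_apply, Pi.sub_apply, smul_eq_mul]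
  linarith

/-- At a maximizer of the penalized average, the curvature bounds control the exponent. -/
lemma le_symmExponent_zero {n : ℕ} {V W Φ : (Fin n → ℝ) → ℝ}
    {A B G : Matrix (Fin n) (Fin n) ℝ}
    (hV : ConvexOn ℝ Set.univ fun x : Fin n → ℝ => (2 : ℝ)⁻¹ * (A.mulVec x ⬝ᵥ x) - V x)
    (hW : ConvexOn ℝ Set.univ fun x : Fin n → ℝ => W x - (2 : ℝ)⁻¹ * (B.mulVec x ⬝ᵥ x))
    (hG : G.IsHermitian) (hGBG : G * B * G = A) {x h : Fin n → ℝ} {t : ℝ}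
    (ht : (2 : ℝ)⁻¹ • (gradVec Φ (x + h) - gradVec Φ (x - h)) = t • G.mulVec h) :
    -V x + (2 : ℝ)⁻¹ * ((t ^ 2 - 1) * (A.mulVec h ⬝ᵥ h)) ≤
      symmExponent V W (gradVec Φ) 0 h x := by
  set y₁ := gradVec Φ (x + h)
  set y₂ := gradVec Φ (x - h)
  set p := (2 : ℝ)⁻¹ • (y₁ + y₂) with hp
  set k := (2 : ℝ)⁻¹ • (y₁ - y₂) with hk
  have hy₁ : p + k = y₁ := by
    rw [hp, hk, ← smul_add, add_add_sub_cancel, ← two_smul ℝ y₁, smul_smul]; norm_num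
  have hy₂ : p - k = y₂ := by
    rw [hp, hk, ← smul_sub, add_sub_sub_cancel, ← two_smul ℝ y₂, smul_smul]; norm_num
  have hBk : B.mulVec k ⬝ᵥ k = t ^ 2 * (A.mulVec h ⬝ᵥ h) := by
    have hGt : Gᵀ = G := by simpa [conjTranspose_eq_transpose_of_trivial] using hG.eq
    have : B.mulVec (G.mulVec h) ⬝ᵥ G.mulVec h = A.mulVec h ⬝ᵥ h := by
      rw [← hGBG, Matrix.mul_assoc, ← mulVec_mulVec, ← mulVec_mulVec]
      conv_rhs => rw [← hGt, mulVec_transpose, ← dotProduct_mulVec, hGt]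
    rw [ht, mulVec_smul, smul_dotProduct, dotProduct_smul, this, smul_eq_mul, smul_eq_mul]
    ring
  have h1 := hW.le_half_add p k
  have h2 := hV.le_half_add x h
  have h3 := quadForm_parallelogram B p k
  have h4 := quadForm_parallelogram A x h
  rw [hy₁, hy₂] at h1 h3
  rw [symmExponent, zero_smul, add_zero]
  change _ ≤ (2 : ℝ)⁻¹ * ((W y₁ - V (x + h)) + (W y₂ - V (x - h))) - W p
  rw [hBk] at h3
  linarith

lemma continuous_symmExponent {n : ℕ} {V W : (Fin n → ℝ) → ℝ} {T : (Fin n → ℝ) → Fin n → ℝ}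
    (hV : Continuous V) (hW : Continuous W) (hT : Continuous T) :
    Continuous fun p : ℝ × (Fin n → ℝ) × (Fin n → ℝ) => symmExponent V W T p.1 p.2.1 p.2.2 := by
  unfold symmExponent
  fun_prop

/-- Along nearly optimal choices from a dense sequence, the lower limit of the exponentials is
attained at a maximizer of the penalized average. -/
lemma exists_maximizer_liminf_eq {n : ℕ} {V W Φ : (Fin n → ℝ) → ℝ}
    {T : (Fin n → ℝ) → Fin n → ℝ} (hV : Continuous V) (hW : Continuous W) (hT : Continuous T)
    (hΦ : Continuous Φ) {G : Matrix (Fin n) (Fin n) ℝ} (hG : G.PosDef) {m : ℝ} (hm : 0 < m)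
    {d : ℕ → Fin n → ℝ} (hdU : ∀ j, G.mulVec (d j) ⬝ᵥ d j < m)
    (hdense : ∀ k, G.mulVec k ⬝ᵥ k < m → k ∈ closure (Set.range d))
    {ε : ℕ → ℝ} (hε : Filter.Tendsto ε Filter.atTop (nhds 0)) (x : Fin n → ℝ) :
    ∃ h, G.mulVec h ⬝ᵥ h < m ∧
      (∀ k, G.mulVec k ⬝ᵥ k < m → penalizedAverage Φ G m x k ≤ penalizedAverage Φ G m x h) ∧
      Filter.liminf (fun N => ENNReal.ofReal (Real.exp (symmExponent V W T (ε N)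
        (d (bestIndex (fun j y => penalizedAverage Φ G m y (d j)) N x)) x))) Filter.atTop =
      ENNReal.ofReal (Real.exp (symmExponent V W T 0 h x)) := by
  set u : ℕ → (Fin n → ℝ) → ℝ := fun j y => penalizedAverage Φ G m y (d j) with hu
  set e : ℕ → Fin n → ℝ := fun N => d (bestIndex u N x) with he
  set f : ℕ → ℝ≥0∞ :=
    fun N => ENNReal.ofReal (Real.exp (symmExponent V W T (ε N) (e N) x)) with hf
  have hbest : ∀ N, ∀ j ≤ N, penalizedAverage Φ G m x (d j) ≤ penalizedAverage Φ G m x (e N) :=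
    fun N => le_bestIndex u N x
  obtain ⟨κ, hκ, hκle⟩ := exists_lt_forall_quadForm_le hΦ hG hm x (penalizedAverage Φ G m x (d 0))
  obtain ⟨φ, hφlim, hφ⟩ := exists_seq_tendsto_liminf (f := Filter.atTop) (u := f)
  obtain ⟨h, hh, ψ, hψ, hψlim⟩ := (isCompact_setOf_quadForm_le hG κ).tendsto_subseq
    (x := e ∘ φ) fun N => hκle _ (hdU _) (hbest _ 0 (Nat.zero_le _))
  have hhm : G.mulVec h ⬝ᵥ h < m := lt_of_le_of_lt hh hκ
  have hφψ : Filter.Tendsto (φ ∘ ψ) Filter.atTop Filter.atTop := hφ.comp hψ.tendsto_atTop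
  refine ⟨h, hhm, fun k hk => ?_, ?_⟩
  · have hlim : Filter.Tendsto (fun N => penalizedAverage Φ G m x (e (φ (ψ N)))) Filter.atTop
        (nhds (penalizedAverage Φ G m x h)) :=
      (continuousAt_penalizedAverage hΦ hm x hhm).tendsto.comp hψlim
    have hdj : ∀ j, penalizedAverage Φ G m x (d j) ≤ penalizedAverage Φ G m x h := fun j =>
      ge_of_tendsto hlim ((hφψ.eventually_ge_atTop j).mono fun N hN => hbest _ j hN)
    obtain ⟨w, hw, hwk⟩ := mem_closure_iff_seq_limit.mp (hdense k hk)
    refine le_of_tendsto ((continuousAt_penalizedAverage hΦ hm x hk).tendsto.comp hwk)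
      (Filter.Eventually.of_forall fun N => ?_)
    obtain ⟨j, hj⟩ := hw N
    simpa [← hj] using hdj j
  · have h1 : Filter.Tendsto (fun N => f (φ (ψ N))) Filter.atTop
        (nhds (Filter.liminf f Filter.atTop)) := hφlim.comp hψ.tendsto_atTop
    refine tendsto_nhds_unique h1 ?_
    refine ENNReal.tendsto_ofReal ((Real.continuous_exp.tendsto _).comp ?_)
    have hp : Filter.Tendsto (fun N => (ε (φ (ψ N)), e (φ (ψ N)), x)) Filter.atTop
        (nhds (0, h, x)) :=
      (hε.comp hφψ).prodMk_nhds (hψlim.prodMk_nhds tendsto_const_nhds)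
    exact ((continuous_symmExponent hV hW hT).tendsto _).comp hp

/-- The penalized average is maximal at the origin, for almost every base point. -/
lemma ae_penalizedAverage_le {n : ℕ} {V W Φ : (Fin n → ℝ) → ℝ}
    {A B G : Matrix (Fin n) (Fin n) ℝ} (hA : A.PosDef) (hVc : Continuous V) (hWc : Continuous W)
    (hμ : IsProbabilityMeasure
      (volume.withDensity fun x : Fin n → ℝ => ENNReal.ofReal (Real.exp (-V x))))
    (hν : IsProbabilityMeasure
      (volume.withDensity fun x : Fin n → ℝ => ENNReal.ofReal (Real.exp (-W x))))
    (hV : ConvexOn ℝ Set.univ fun x : Fin n → ℝ => (2 : ℝ)⁻¹ * (A.mulVec x ⬝ᵥ x) - V x)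
    (hW : ConvexOn ℝ Set.univ fun x : Fin n → ℝ => W x - (2 : ℝ)⁻¹ * (B.mulVec x ⬝ᵥ x))
    (hc : ConvexOn ℝ Set.univ Φ) (hd : Differentiable ℝ Φ)
    (htransport : Measure.map (gradVec Φ)
        (volume.withDensity fun x : Fin n → ℝ => ENNReal.ofReal (Real.exp (-V x))) =
      volume.withDensity fun x : Fin n → ℝ => ENNReal.ofReal (Real.exp (-W x)))
    (hG : G.PosDef) (hGBG : G * B * G = A) {m : ℝ} (hm : 0 < m) :
    ∀ᵐ x, ∀ h, G.mulVec h ⬝ᵥ h < m →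
      penalizedAverage Φ G m x h ≤ penalizedAverage Φ G m x 0 := by
  have hΦ := hd.continuous
  have hT := continuous_gradVec hc hd
  let U : Set (Fin n → ℝ) := {h | G.mulVec h ⬝ᵥ h < m}
  have : Nonempty U := ⟨⟨0, by simpa [U] using hm⟩⟩
  let d : ℕ → Fin n → ℝ := fun j => (TopologicalSpace.denseSeq U j : Fin n → ℝ)
  have hdU : ∀ j, G.mulVec (d j) ⬝ᵥ d j < m := fun j => (TopologicalSpace.denseSeq U j).2
  have hdense : ∀ k, G.mulVec k ⬝ᵥ k < m → k ∈ closure (Set.range d) := by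
    intro k hk
    have h1 := (TopologicalSpace.denseRange_denseSeq U) ⟨k, hk⟩
    have h2 := closure_subtype.mp h1
    rwa [← Set.range_comp] at h2
  let ε : ℕ → ℝ := fun N => 1 / ((N : ℝ) + 1)
  have hε : Filter.Tendsto ε Filter.atTop (nhds 0) := tendsto_one_div_add_atTop_nhds_zero_nat
  let u : ℕ → (Fin n → ℝ) → ℝ := fun j y => penalizedAverage Φ G m y (d j)
  let f : ℕ → (Fin n → ℝ) → ℝ≥0∞ := fun N x =>
    ENNReal.ofReal (Real.exp (symmExponent V W (gradVec Φ) (ε N) (d (bestIndex u N x)) x))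
  have hfm : ∀ N, Measurable (f N) := by
    intro N
    have hum : ∀ j, Measurable (u j) := fun j => by
      refine Continuous.measurable ?_
      change Continuous fun y => (2 : ℝ)⁻¹ * (Φ (y + d j) + Φ (y - d j)) - barrier G m (d j)
      fun_prop
    have hs : ∀ j, Measurable fun x => symmExponent V W (gradVec Φ) (ε N) (d j) x := fun j =>
      ((continuous_symmExponent hVc hWc hT).comp
        (by fun_prop : Continuous fun x : Fin n → ℝ => (ε N, d j, x))).measurable
    exact ENNReal.measurable_ofReal.comp (Real.measurable_exp.comp
      (measurable_apply_of_countable hs (measurable_bestIndex hum N)))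
  have hfle : ∀ N, ∫⁻ x, f N x ≤ 1 := fun N =>
    lintegral_exp_symmExponent_le hVc hWc hν hc hd htransport d (fun j => barrier G m (d j)) N
      (by positivity : 0 < ε N) rfl
  have hVint : ∫⁻ x, ENNReal.ofReal (Real.exp (-V x)) = 1 := by
    have := hμ.measure_univ
    rwa [withDensity_apply _ MeasurableSet.univ, Measure.restrict_univ] at this
  have hliminf : ∫⁻ x, Filter.liminf (fun N => f N x) Filter.atTop ≤ 1 :=
    (lintegral_liminf_le hfm).trans
      (Filter.liminf_le_of_le (by isBoundedDefault) fun b hb =>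
        let ⟨N, hN⟩ := hb.exists; hN.trans (hfle N))
  have hmain : ∀ x, ∃ h, G.mulVec h ⬝ᵥ h < m ∧
      (∀ k, G.mulVec k ⬝ᵥ k < m → penalizedAverage Φ G m x k ≤ penalizedAverage Φ G m x h) ∧
      ENNReal.ofReal (Real.exp (-V x + (2 : ℝ)⁻¹ *
        (((1 - (G.mulVec h ⬝ᵥ h) / m)⁻¹ ^ 2 - 1) * (A.mulVec h ⬝ᵥ h)))) ≤
      Filter.liminf (fun N => f N x) Filter.atTop := by
    intro x
    obtain ⟨h, hh, hmax, hlim⟩ :=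
      exists_maximizer_liminf_eq hVc hWc hT hΦ hG hm hdU hdense hε x
    refine ⟨h, hh, hmax, le_of_le_of_eq ?_ hlim.symm⟩
    exact ENNReal.ofReal_le_ofReal (Real.exp_le_exp.mpr (le_symmExponent_zero hV hW
      hG.isHermitian hGBG (half_smul_gradVec_sub_eq hd hG.isHermitian hm hh hmax)))
  have hqpos : ∀ {M : Matrix (Fin n) (Fin n) ℝ}, M.PosDef → ∀ {h : Fin n → ℝ}, h ≠ 0 →
      0 < M.mulVec h ⬝ᵥ h := fun hM h hh => by
    have := hM.dotProduct_mulVec_pos hh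
    rwa [star_trivial, dotProduct_comm] at this
  have hgain : ∀ h : Fin n → ℝ, G.mulVec h ⬝ᵥ h < m → h ≠ 0 →
      0 < ((1 - (G.mulVec h ⬝ᵥ h) / m)⁻¹ ^ 2 - 1) * (A.mulVec h ⬝ᵥ h) := by
    intro h hh h0
    refine mul_pos (sub_pos.mpr (one_lt_pow₀ ?_ two_ne_zero)) (hqpos hA h0)
    refine (one_lt_inv₀ (one_sub_div_pos hm hh)).mpr ?_
    have := div_pos (hqpos hG h0) hm
    linarith
  have hle : ∀ x, ENNReal.ofReal (Real.exp (-V x)) ≤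
      Filter.liminf (fun N => f N x) Filter.atTop := by
    intro x
    obtain ⟨h, hh, -, hlim⟩ := hmain x
    refine le_trans (ENNReal.ofReal_le_ofReal (Real.exp_le_exp.mpr ?_)) hlim
    rcases eq_or_ne h 0 with rfl | h0
    · simp
    · linarith [hgain h hh h0]
  have heq := ae_eq_of_ae_le_of_lintegral_le (Filter.Eventually.of_forall hle)
    (by rw [hVint]; exact ENNReal.one_ne_top) (Measurable.liminf hfm).aemeasurable
    (by rw [hVint]; exact hliminf)
  filter_upwards [heq] with x hx
  obtain ⟨h, hh, hmax, hlim⟩ := hmain x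
  rw [← hx, ENNReal.ofReal_le_ofReal_iff (Real.exp_pos _).le, Real.exp_le_exp] at hlim
  have h0 : h = 0 := by
    by_contra h0
    linarith [hgain h hh h0]
  exact h0 ▸ hmax

/-- Letting the barrier parameter tend to infinity in the maximality of the origin. -/
lemma half_add_sub_le_of_penalizedAverage_le {n : ℕ} {Φ : (Fin n → ℝ) → ℝ}
    {G : Matrix (Fin n) (Fin n) ℝ} {x h : Fin n → ℝ}
    (hle : ∀ m, 0 < m → G.mulVec h ⬝ᵥ h < m →
      penalizedAverage Φ G m x h ≤ penalizedAverage Φ G m x 0) :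
    (2 : ℝ)⁻¹ * (Φ (x + h) + Φ (x - h)) - Φ x ≤ (2 : ℝ)⁻¹ * (G.mulVec h ⬝ᵥ h) := by
  set q := G.mulVec h ⬝ᵥ h with hq
  set D := (2 : ℝ)⁻¹ * (Φ (x + h) + Φ (x - h)) - Φ x with hD
  have hbound : ∀ m, 0 < m → q < m → D * (1 - q / m) ≤ (2 : ℝ)⁻¹ * q := by
    intro m hm hqm
    have hpos := one_sub_div_pos hm hqm
    have h1 := hle m hm hqm
    simp only [penalizedAverage, barrier, add_zero, sub_zero, mulVec_zero, zero_dotProduct,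
      zero_div, Real.log_one, mul_zero, ← hq] at h1
    have h2 := Real.one_sub_inv_le_log_of_pos hpos
    have h3 : D ≤ m / 2 * ((1 - q / m)⁻¹ - 1) := by
      have := mul_le_mul_of_nonneg_left h2 (by positivity : 0 ≤ m / 2)
      linarith
    calc D * (1 - q / m) ≤ m / 2 * ((1 - q / m)⁻¹ - 1) * (1 - q / m) :=
          mul_le_mul_of_nonneg_right h3 hpos.le
      _ = m / 2 * ((1 - q / m)⁻¹ * (1 - q / m) - (1 - q / m)) := by ring
      _ = (2 : ℝ)⁻¹ * q := by
          rw [inv_mul_cancel₀ hpos.ne']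
          field_simp
          ring
  have hlim : Filter.Tendsto (fun m : ℝ => D * (1 - q / m)) Filter.atTop (nhds (D * (1 - 0))) :=
    (tendsto_const_nhds.sub (tendsto_const_nhds.div_atTop Filter.tendsto_id)).const_mul D
  rw [sub_zero, mul_one] at hlim
  refine le_of_tendsto hlim ?_
  filter_upwards [Filter.eventually_gt_atTop 0, Filter.eventually_gt_atTop q] with m h1 h2
  exact hbound m h1 h2

/-- A continuous midpoint-convex function is convex. -/
lemma convexOn_univ_of_le_half_add {E : Type*} [AddCommGroup E] [Module ℝ E]
    [TopologicalSpace E] [ContinuousAdd E] [ContinuousSMul ℝ E] {f : E → ℝ} (hf : Continuous f)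
    (hmid : ∀ x h, f x ≤ (2 : ℝ)⁻¹ * (f (x + h) + f (x - h))) : ConvexOn ℝ Set.univ f := by
  refine ⟨convex_univ, fun a _ b _ s t hs ht hst => ?_⟩
  by_contra! hlt
  let F : ℝ → ℝ := fun r => f (a + r • (b - a)) - ((1 - r) * f a + r * f b)
  have hF : Continuous F := by
    have : Continuous fun r : ℝ => f (a + r • (b - a)) := hf.comp (by fun_prop)
    fun_prop
  have hFmid : ∀ r δ, F r ≤ (2 : ℝ)⁻¹ * (F (r + δ) + F (r - δ)) := by
    intro r δ
    have := hmid (a + r • (b - a)) (δ • (b - a))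
    have h1 : a + r • (b - a) + δ • (b - a) = a + (r + δ) • (b - a) := by module
    have h2 : a + r • (b - a) - δ • (b - a) = a + (r - δ) • (b - a) := by module
    rw [h1, h2] at this
    simp only [F]
    linarith
  have hF0 : F 0 = 0 := by simp [F]
  have hF1 : F 1 = 0 := by simp [F]
  have hFt : 0 < F t := by
    have hs' : s = 1 - t := by linarith
    have : a + t • (b - a) = s • a + t • b := by rw [hs']; module
    simp only [F]
    rw [this, ← hs']
    simpa using hlt
  obtain ⟨r, hr, hrmax⟩ := isCompact_Icc.exists_isMaxOn (s := Set.Icc (0 : ℝ) 1)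
    ⟨t, ht, by linarith⟩ hF.continuousOn
  let K : Set ℝ := Set.Icc 0 1 ∩ F ⁻¹' {F r}
  have hK : IsCompact K := isCompact_Icc.inter_right (isClosed_singleton.preimage hF)
  obtain ⟨r₀, hr₀, hleast⟩ := hK.exists_isLeast ⟨r, hr, rfl⟩
  have hpos : 0 < F r₀ := by
    rw [show F r₀ = F r from hr₀.2]
    exact hFt.trans_le (hrmax ⟨ht, by linarith⟩)
  have h0 : 0 < r₀ := lt_of_le_of_ne hr₀.1.1 fun h => by rw [← h, hF0] at hpos; exact hpos.false
  have h1 : r₀ < 1 := lt_of_le_of_ne hr₀.1.2 fun h => by rw [h, hF1] at hpos; exact hpos.false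
  set δ := min r₀ (1 - r₀) with hδ
  have hδ0 : 0 < δ := lt_min h0 (by linarith)
  have hδ1 : δ ≤ r₀ := min_le_left _ _
  have hδ2 : δ ≤ 1 - r₀ := min_le_right _ _
  have hmem : r₀ - δ ∈ Set.Icc (0 : ℝ) 1 := ⟨by linarith, by linarith⟩
  have hplus : F (r₀ + δ) ≤ F r := hrmax ⟨by linarith, by linarith⟩
  have hminus : F (r₀ - δ) ≤ F r := hrmax hmem
  have hm := hFmid r₀ δ
  rw [show F r₀ = F r from hr₀.2] at hm
  have := hleast (a := r₀ - δ) ⟨hmem, le_antisymm hminus (by linarith)⟩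
  linarith

lemma mul_mul_conj_inv_sqrt {n : ℕ} {A B R S : Matrix (Fin n) (Fin n) ℝ} (hB : B.PosDef)
    (hR : R.PosDef) (hRA : R * R = A) (hS : S.PosDef) (hSS : S * S = (R * B * R)⁻¹) :
    (R * S * R) * B * (R * S * R) = A := by
  have hRu : IsUnit R.det := hR.det_pos.ne'.isUnit
  have hSu : IsUnit S.det := hS.det_pos.ne'.isUnit
  have hMu : IsUnit (R * B * R).det := by
    rw [det_mul, det_mul]
    exact (hRu.mul hB.det_pos.ne'.isUnit).mul hRu
  have h1 : S * (S * (R * B * R)) = 1 := by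
    rw [← Matrix.mul_assoc, hSS, nonsing_inv_mul _ hMu]
  have h2 : S * (R * B * R) * S = 1 := mul_eq_one_comm.mp h1
  calc (R * S * R) * B * (R * S * R) = R * (S * (R * B * R) * S) * R := by
        simp only [Matrix.mul_assoc]
    _ = A := by rw [h2, Matrix.mul_one, hRA]

lemma posDef_conj {n : ℕ} {R S : Matrix (Fin n) (Fin n) ℝ} (hR : R.PosDef) (hS : S.PosDef) :
    (R * S * R).PosDef := by
  have h := hS.conjTranspose_mul_mul_same (B := R)
    (mulVec_injective_of_isUnit ((isUnit_iff_isUnit_det R).mpr hR.det_pos.ne'.isUnit))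
  rwa [hR.isHermitian.eq] at h

/-- An anisotropic extension of Caffarelli's contraction theorem: if
`∇²V ≤ A` and `∇²W ≥ B` (expressed through convexity), then the Brenier map
`∇Φ` from `e^{-V} dx` to `e^{-W} dx` satisfies
`∇²Φ ≤ A^{1/2} (A^{1/2} B A^{1/2})^{-1/2} A^{1/2}`. -/
theorem general_caffarelli_contraction
    {n : ℕ} (V W : (Fin n → ℝ) → ℝ)
    (A B : Matrix (Fin n) (Fin n) ℝ) (hA : A.PosDef) (hB : B.PosDef)
    (hμ : IsProbabilityMeasure
      (volume.withDensity fun x : Fin n → ℝ => ENNReal.ofReal (Real.exp (-V x))))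
    (hν : IsProbabilityMeasure
      (volume.withDensity fun x : Fin n → ℝ => ENNReal.ofReal (Real.exp (-W x))))
    (hV : ConvexOn ℝ Set.univ fun x : Fin n → ℝ =>
      (2 : ℝ)⁻¹ * (A.mulVec x ⬝ᵥ x) - V x)
    (hW : ConvexOn ℝ Set.univ fun x : Fin n → ℝ =>
      W x - (2 : ℝ)⁻¹ * (B.mulVec x ⬝ᵥ x))
    (Φ : (Fin n → ℝ) → ℝ)
    (hΦconv : ConvexOn ℝ Set.univ Φ) (hΦdiff : Differentiable ℝ Φ)
    (htransport : Measure.map (gradVec Φ)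
        (volume.withDensity fun x : Fin n → ℝ => ENNReal.ofReal (Real.exp (-V x))) =
      volume.withDensity fun x : Fin n → ℝ => ENNReal.ofReal (Real.exp (-W x)))
    (R : Matrix (Fin n) (Fin n) ℝ) (hRpos : R.PosDef) (hRA : R * R = A)
    (S : Matrix (Fin n) (Fin n) ℝ) (hSpos : S.PosDef) (hS : S * S = (R * B * R)⁻¹) :
    ConvexOn ℝ Set.univ fun x : Fin n → ℝ =>
      (2 : ℝ)⁻¹ * ((R * S * R).mulVec x ⬝ᵥ x) - Φ x := by
  have hVc : Continuous V := by
    simpa using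
      ((continuous_quadForm A).const_mul (2 : ℝ)⁻¹).fun_sub hV.locallyLipschitz.continuous
  have hWc : Continuous W := by
    simpa using
      hW.locallyLipschitz.continuous.fun_add ((continuous_quadForm B).const_mul (2 : ℝ)⁻¹)
  have hΦ := hΦdiff.continuous
  set G := R * S * R
  have hG : G.PosDef := posDef_conj hRpos hSpos
  have hGBG : G * B * G = A := mul_mul_conj_inv_sqrt hB hRpos hRA hSpos hS
  have hpen : ∀ m, 0 < m → ∀ h x, G.mulVec h ⬝ᵥ h < m →
      penalizedAverage Φ G m x h ≤ penalizedAverage Φ G m x 0 := by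
    intro m hm h x hh
    have hae := ae_penalizedAverage_le hA hVc hWc hμ hν hV hW hΦconv hΦdiff htransport hG hGBG hm
    have hcont : ∀ k, Continuous fun y => penalizedAverage Φ G m y k := fun k => by
      unfold penalizedAverage
      fun_prop
    have hclosed : IsClosed {y | penalizedAverage Φ G m y h ≤ penalizedAverage Φ G m y 0} :=
      isClosed_le (hcont h) (hcont 0)
    have hdense : Dense {y | penalizedAverage Φ G m y h ≤ penalizedAverage Φ G m y 0} :=
      Measure.dense_of_ae (hae.mono fun y hy => hy h hh)
    exact hclosed.closure_subset (hdense x)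
  refine convexOn_univ_of_le_half_add
    (((continuous_quadForm G).const_mul (2 : ℝ)⁻¹).sub hΦ) fun x h => ?_
  have h1 := half_add_sub_le_of_penalizedAverage_le fun m hm hh => hpen m hm h x hh
  have h2 := quadForm_parallelogram G x h
  linarith
end
end
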